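/- arXiv:1603.01960 — 4 statements merged into one kernel-verified Lean document; each statement's English description precedes it below -/
import Mathlib

section
/- Let s ∈ (0,1/2), let Ω ⊂ ℝ^n be a bounded domain and let W be the double well potential. Then for every k ∈ ℕ there exists a constant c_k > 0 such that for every ε ∈ (0,1) and every f ∈ S_ε^k one has F_ε(f) = ∫_Ω∫_Ω |f(x)−f(y)|²/|x−y|^{n+2s} dx dy + ε^{−2s} ∫_Ω W(f) dx ≤ c_k; in particular the bound c_k is independent of ε. -/
open MeasureTheory Real Set
open scoped ENNReal

noncomputable section

/-- The double well potential: an even nonnegative `C²` function vanishing exactly at `±1`,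
positive on `(-1,1)`, with nondegenerate minima at `±1`. -/
def IsDoubleWell (W : ℝ → ℝ) : Prop :=
  ContDiff ℝ 2 W ∧ (∀ t, W (-t) = W t) ∧ (∀ t, 0 ≤ W t) ∧
  W 1 = 0 ∧ W (-1) = 0 ∧ (∀ t ∈ Set.Ioo (-1 : ℝ) 1, 0 < W t) ∧
  deriv W 1 = 0 ∧ deriv W (-1) = 0 ∧
  0 < iteratedDeriv 2 W 1 ∧ 0 < iteratedDeriv 2 W (-1)

/-- The Gagliardo double integral `∫_Ω ∫_Ω |u(x)-u(y)|² / |x-y|^{n+2s} dx dy`. -/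
def gagliardo (n : ℕ) (s : ℝ) (Ω : Set (EuclideanSpace ℝ (Fin n)))
    (u : EuclideanSpace ℝ (Fin n) → ℝ) : ℝ≥0∞ :=
  ∫⁻ x in Ω, ∫⁻ y in Ω, ENNReal.ofReal (|u x - u y| ^ 2 / dist x y ^ ((n : ℝ) + 2 * s))

/-- The potential term `∫_Ω W(u) dx`. -/
def potentialTerm (n : ℕ) (Ω : Set (EuclideanSpace ℝ (Fin n))) (W : ℝ → ℝ)
    (u : EuclideanSpace ℝ (Fin n) → ℝ) : ℝ≥0∞ :=
  ∫⁻ x in Ω, ENNReal.ofReal (W (u x))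

/-- The cosine polynomial `φ_λ(t) = ∑_{m=0}^k λ⁽ᵐ⁾ cos(m t)`. -/
def cosPoly (k : ℕ) (lam : EuclideanSpace ℝ (Fin (k + 1))) (t : ℝ) : ℝ :=
  ∑ m : Fin (k + 1), lam m * Real.cos ((m : ℕ) * t)

/-- The averaged sign `L_ε(φ_λ)(t) = (1/(2ε)) ∫_{t-ε}^{t+ε} φ_λ(τ)/|φ_λ(τ)| dτ`. -/
def Lavg (k : ℕ) (ε : ℝ) (lam : EuclideanSpace ℝ (Fin (k + 1))) (t : ℝ) : ℝ :=
  (1 / (2 * ε)) * ∫ τ in (t - ε)..(t + ε), cosPoly k lam τ / |cosPoly k lam τ|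

/-- The family `S_ε^k = { L_ε(φ_λ) ∘ P₁ : |λ| = 1 }` of functions on `ℝ^n`. -/
def Sset (n k : ℕ) (hn : 0 < n) (ε : ℝ) : Set (EuclideanSpace ℝ (Fin n) → ℝ) :=
  {f | ∃ lam : EuclideanSpace ℝ (Fin (k + 1)), ‖lam‖ = 1 ∧
    ∀ x, f x = Lavg k ε lam (x ⟨0, hn⟩)}

theorem cosPoly_continuous (k : ℕ) (lam : EuclideanSpace ℝ (Fin (k + 1))) :
    Continuous (cosPoly k lam) := by
  unfold cosPoly
  fun_prop

/-- A cosine polynomial of order `k` is a polynomial of degree at most `k` in `cos t`. -/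
theorem exists_polynomial_eval_cos_eq_cosPoly (k : ℕ) (lam : EuclideanSpace ℝ (Fin (k + 1)))
    (hlam : lam ≠ 0) :
    ∃ p : Polynomial ℝ, p ≠ 0 ∧ p.natDegree ≤ k ∧ ∀ t, p.eval (cos t) = cosPoly k lam t := by
  let S : Polynomial.Sequence ℝ :=
    { elems' := fun m => Polynomial.Chebyshev.T ℝ (m : ℤ)
      degree_eq' := fun m => by simp [Polynomial.Chebyshev.degree_T] }
  have hli : LinearIndependent ℝ (fun m : Fin (k + 1) => Polynomial.Chebyshev.T ℝ ((m : ℕ) : ℤ)) :=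
    S.linearIndependent.comp _ Fin.val_injective
  refine ⟨∑ m : Fin (k + 1), lam m • Polynomial.Chebyshev.T ℝ ((m : ℕ) : ℤ), ?_, ?_, ?_⟩
  · intro h
    apply hlam
    ext m
    exact Fintype.linearIndependent_iff.1 hli (fun m => lam m) h m
  · refine Polynomial.natDegree_sum_le_of_forall_le _ _ fun m _ => ?_
    refine (Polynomial.natDegree_smul_le _ _).trans ?_
    rw [Polynomial.Chebyshev.natDegree_T, Int.natAbs_natCast]
    omega
  · intro t
    simp [Polynomial.eval_finsetSum, Polynomial.Chebyshev.T_real_cos, cosPoly]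

theorem eq_of_cos_eq_of_floor_div_pi_eq {t u : ℝ} (hcos : cos t = cos u)
    (hfloor : ⌊t / π⌋ = ⌊u / π⌋) : t = u := by
  have key : ∀ v : ℝ, v - ⌊v / π⌋ * π ∈ Set.Icc 0 π := fun v => by
    have h1 := (le_div_iff₀ pi_pos).1 (Int.floor_le (v / π))
    have h2 := (div_lt_iff₀ pi_pos).1 (Int.lt_floor_add_one (v / π))
    constructor <;> linarith
  have ht := key t
  rw [hfloor] at ht
  have := injOn_cos ht (key u) (by rw [cos_sub_int_mul_pi, cos_sub_int_mul_pi, hcos])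
  linarith

/-- The number of zeros of a cosine polynomial in `[-A, A]` is bounded in terms of its order. -/
theorem exists_card_zeros_cosPoly_le (k : ℕ) (A : ℝ) :
    ∃ N : ℕ, ∀ lam : EuclideanSpace ℝ (Fin (k + 1)), lam ≠ 0 →
      ∃ Z : Finset ℝ, Z.card ≤ N ∧ ∀ t, |t| ≤ A → cosPoly k lam t = 0 → t ∈ Z := by
  refine ⟨k * (Finset.Icc ⌊-A / π⌋ ⌊A / π⌋).card, fun lam hlam => ?_⟩
  obtain ⟨p, hp0, hpdeg, hp⟩ := exists_polynomial_eval_cos_eq_cosPoly k lam hlam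
  set T : Finset (ℝ × ℤ) := p.roots.toFinset ×ˢ Finset.Icc ⌊-A / π⌋ ⌊A / π⌋ with hT
  have hmaps : Set.MapsTo (fun t : ℝ => (cos t, ⌊t / π⌋))
      {t | |t| ≤ A ∧ cosPoly k lam t = 0} T := by
    rintro t ⟨htA, ht0⟩
    obtain ⟨h1, h2⟩ := abs_le.1 htA
    simp only [hT, Finset.coe_product, Set.mem_prod, Finset.mem_coe, Multiset.mem_toFinset,
      Finset.mem_Icc]
    refine ⟨(Polynomial.mem_roots hp0).2 ?_, ?_, ?_⟩
    · rw [Polynomial.IsRoot, hp, ht0]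
    · gcongr
    · gcongr
  have hinj : Set.InjOn (fun t : ℝ => (cos t, ⌊t / π⌋))
      {t | |t| ≤ A ∧ cosPoly k lam t = 0} := by
    intro t _ u _ htu
    exact eq_of_cos_eq_of_floor_div_pi_eq (congrArg Prod.fst htu) (congrArg Prod.snd htu)
  have hfin := Set.Finite.of_injOn hmaps hinj T.finite_toSet
  refine ⟨hfin.toFinset, ?_, fun t h1 h2 => by simp [h1, h2]⟩
  calc hfin.toFinset.card ≤ T.card :=
        Finset.card_le_card_of_injOn _ (by simpa using hmaps) (by simpa using hinj)
    _ ≤ _ := by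
        rw [hT, Finset.card_product]
        gcongr
        exact (Multiset.toFinset_card_le _).trans ((Polynomial.card_roots' p).trans hpdeg)

theorem abs_div_abs_self_le_one (a : ℝ) : |(a / |a|)| ≤ 1 := by
  rw [abs_div, abs_abs]
  exact div_self_le_one _

theorem div_abs_eq_div_abs_of_no_zero {φ : ℝ → ℝ} (hφ : Continuous φ) {t u : ℝ}
    (h : ∀ z ∈ Set.uIcc t u, φ z ≠ 0) : φ t / |φ t| = φ u / |φ u| := by
  have ht := h t Set.left_mem_uIcc
  have hu := h u Set.right_mem_uIcc
  have hnot : (0 : ℝ) ∉ Set.uIcc (φ t) (φ u) := fun h0 => by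
    obtain ⟨z, hz, hz0⟩ := intermediate_value_uIcc hφ.continuousOn h0
    exact h z hz hz0
  rw [Set.mem_uIcc] at hnot
  push Not at hnot
  rcases lt_or_gt_of_ne ht with h1 | h1
  · have h2 : φ u < 0 := hnot.1 h1.le
    rw [abs_of_neg h1, abs_of_neg h2, div_neg, div_neg, div_self ht, div_self hu]
  · have h2 : 0 < φ u := by
      by_contra h3
      exact absurd (hnot.2 (not_lt.1 h3)) (not_lt.2 h1.le)
    rw [abs_of_pos h1, abs_of_pos h2, div_self ht, div_self hu]

/-- The jumps of the sign of `φ` are controlled by the zeros of `φ`. -/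
theorem ofReal_abs_sign_sub_le {φ : ℝ → ℝ} (hφ : Continuous φ) {A : ℝ} {Z : Finset ℝ}
    (hZ : ∀ t, |t| ≤ A → φ t = 0 → t ∈ Z) {t u : ℝ} (ht : |t| ≤ A) (hu : |u| ≤ A) :
    ENNReal.ofReal |(φ t / |φ t| - φ u / |φ u|)|
      ≤ ∑ z ∈ Z, 2 * (Set.uIcc t u).indicator 1 z := by
  by_cases h : ∀ z ∈ Set.uIcc t u, φ z ≠ 0
  · simp [div_abs_eq_div_abs_of_no_zero hφ h]
  · push Not at h
    obtain ⟨z, hz, hz0⟩ := h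
    have hzA : |z| ≤ A := by
      rw [abs_le] at *
      rw [Set.mem_uIcc] at hz
      rcases hz with hz | hz <;> constructor <;> linarith
    calc ENNReal.ofReal |(φ t / |φ t| - φ u / |φ u|)| ≤ ENNReal.ofReal 2 := by
          apply ENNReal.ofReal_le_ofReal
          have h1 := abs_sub (φ t / |φ t|) (φ u / |φ u|)
          have h2 := abs_div_abs_self_le_one (φ t)
          have h3 := abs_div_abs_self_le_one (φ u)
          linarith
      _ = 2 * (Set.uIcc t u).indicator 1 z := by simp [hz]
      _ ≤ _ := Finset.single_le_sum (f := fun z => 2 * (Set.uIcc t u).indicator (1 : ℝ → ℝ≥0∞) z)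
          (fun _ _ => zero_le) (hZ z hzA hz0)

theorem measurable_div_abs_self {φ : ℝ → ℝ} (hφ : Continuous φ) :
    Measurable fun τ => φ τ / |φ τ| :=
  hφ.measurable.div hφ.abs.measurable

theorem intervalIntegrable_div_abs_self {φ : ℝ → ℝ} (hφ : Continuous φ) (a b : ℝ) :
    IntervalIntegrable (fun τ => φ τ / |φ τ|) volume a b := by
  refine (intervalIntegrable_const (c := (1 : ℝ))).mono_fun
    (measurable_div_abs_self hφ).aestronglyMeasurable (Filter.Eventually.of_forall fun τ => ?_)
  rw [norm_one]
  exact abs_div_abs_self_le_one (φ τ)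

/-- The average of the sign of `φ` over the interval of radius `ε` around `t`. -/
def avgSign (φ : ℝ → ℝ) (ε t : ℝ) : ℝ :=
  (1 / (2 * ε)) * ∫ τ in (t - ε)..(t + ε), φ τ / |φ τ|

theorem continuous_avgSign {φ : ℝ → ℝ} (hφ : Continuous φ) (ε : ℝ) :
    Continuous (avgSign φ ε) := by
  have hc := intervalIntegral.continuous_primitive (intervalIntegrable_div_abs_self hφ) 0
  have heq : avgSign φ ε = fun t => (1 / (2 * ε)) *
      ((∫ τ in (0 : ℝ)..(t + ε), φ τ / |φ τ|) - ∫ τ in (0 : ℝ)..(t - ε), φ τ / |φ τ|) := by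
    ext t
    rw [avgSign, intervalIntegral.integral_interval_sub_left] <;>
      exact intervalIntegrable_div_abs_self hφ _ _
  rw [heq]
  exact continuous_const.mul ((hc.comp (continuous_id.add continuous_const)).sub
    (hc.comp (continuous_id.sub continuous_const)))

theorem abs_avgSign_le_one (φ : ℝ → ℝ) {ε : ℝ} (hε : 0 < ε) (t : ℝ) : |avgSign φ ε t| ≤ 1 := by
  have h := intervalIntegral.norm_integral_le_of_norm_le_const (a := t - ε) (b := t + ε) (C := 1)
    (f := fun τ => φ τ / |φ τ|) (fun τ _ => abs_div_abs_self_le_one (φ τ))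
  rw [norm_eq_abs, one_mul, show t + ε - (t - ε) = 2 * ε by ring,
    abs_of_pos (by positivity : 0 < 2 * ε)] at h
  rw [avgSign, abs_mul, abs_of_pos (by positivity : 0 < 1 / (2 * ε))]
  calc 1 / (2 * ε) * |(∫ τ in (t - ε)..(t + ε), φ τ / |φ τ|)| ≤ 1 / (2 * ε) * (2 * ε) := by gcongr
    _ = 1 := by field_simp

/-- Away from the zeros of `φ`, the averaged sign takes only the values `±1`. -/
theorem avgSign_eq_of_no_zero {φ : ℝ → ℝ} (hφ : Continuous φ) {ε : ℝ} (hε : 0 < ε) {t : ℝ}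
    (h : ∀ z ∈ Set.Icc (t - ε) (t + ε), φ z ≠ 0) : avgSign φ ε t = 1 ∨ avgSign φ ε t = -1 := by
  have hI : ∀ τ ∈ Set.uIcc (t - ε) (t + ε), φ τ / |φ τ| = φ t / |φ t| := by
    intro τ hτ
    rw [Set.uIcc_of_le (by linarith)] at hτ
    refine div_abs_eq_div_abs_of_no_zero hφ fun z hz => h z ?_
    rw [Set.mem_uIcc] at hz
    rcases hz with hz | hz <;> constructor <;> linarith [hτ.1, hτ.2]
  have ht : φ t ≠ 0 := h t ⟨by linarith, by linarith⟩
  have heq : avgSign φ ε t = φ t / |φ t| := by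
    rw [avgSign, intervalIntegral.integral_congr hI, intervalIntegral.integral_const, smul_eq_mul]
    field_simp
    ring
  rw [heq]
  rcases lt_or_gt_of_ne ht with h1 | h1
  · right
    rw [abs_of_neg h1, div_neg, div_self ht]
  · left
    rw [abs_of_pos h1, div_self ht]

theorem ofReal_abs_avgSign_sub_le {φ : ℝ → ℝ} (hφ : Continuous φ) {R ε : ℝ} {Z : Finset ℝ}
    (hZ : ∀ t, |t| ≤ R + 1 → φ t = 0 → t ∈ Z) (hε : ε ∈ Set.Ioo (0 : ℝ) 1)
    {t u : ℝ} (ht : |t| ≤ R) (hu : |u| ≤ R) :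
    ENNReal.ofReal |avgSign φ ε t - avgSign φ ε u|
      ≤ ENNReal.ofReal (1 / (2 * ε)) * ∫⁻ τ in Set.Ioc (-ε) ε,
          ∑ z ∈ Z, 2 * (Set.uIcc (t + τ) (u + τ)).indicator 1 z := by
  obtain ⟨hε0, hε1⟩ := hε
  set σ : ℝ → ℝ := fun τ => φ τ / |φ τ|
  have hshift : ∀ v, avgSign φ ε v = (1 / (2 * ε)) * ∫ τ in (-ε)..ε, σ (v + τ) := fun v => by
    rw [avgSign, intervalIntegral.integral_comp_add_left (fun τ => σ τ) v, sub_eq_add_neg]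
  have hint : ∀ v, IntervalIntegrable (fun τ => σ (v + τ)) volume (-ε) ε := fun v => by
    have := (intervalIntegrable_div_abs_self hφ (-ε + v) (ε + v)).comp_add_left v
    simpa using this
  have hdiff : |avgSign φ ε t - avgSign φ ε u|
      = 1 / (2 * ε) * |∫ τ in (-ε)..ε, (σ (t + τ) - σ (u + τ))| := by
    rw [hshift, hshift, ← mul_sub, ← intervalIntegral.integral_sub (hint t) (hint u), abs_mul,
      abs_of_pos (by positivity : 0 < 1 / (2 * ε))]
  rw [hdiff, ENNReal.ofReal_mul (by positivity)]
  gcongr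
  rw [intervalIntegral.integral_of_le (by linarith), ← Real.norm_eq_abs, ofReal_norm]
  refine (enorm_integral_le_lintegral_enorm _).trans ?_
  refine setLIntegral_mono' measurableSet_Ioc fun τ hτ => ?_
  rw [← ofReal_norm, Real.norm_eq_abs]
  rw [abs_le] at ht hu
  exact ofReal_abs_sign_sub_le hφ hZ
    (abs_le.2 ⟨by linarith [hτ.1], by linarith [hτ.2]⟩)
    (abs_le.2 ⟨by linarith [hτ.1], by linarith [hτ.2]⟩)

/-- The volume of a slab of a set all of whose coordinates are bounded by `R`. -/
theorem volume_inter_slab_le {n : ℕ} (hn : 0 < n) {R : ℝ} {S : Set (EuclideanSpace ℝ (Fin n))}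
    (hS : ∀ x ∈ S, ∀ i, |x i| ≤ R) (a b : ℝ) :
    volume (S ∩ {x | x ⟨0, hn⟩ ∈ Set.Icc a b})
      ≤ ENNReal.ofReal (b - a) * ENNReal.ofReal (2 * R) ^ (n - 1) := by
  obtain ⟨m, rfl⟩ : ∃ m, n = m + 1 := ⟨n - 1, by omega⟩
  let B : Set (Fin (m + 1) → ℝ) :=
    Set.Icc (Fin.cons a fun _ => -R) (Fin.cons b fun _ => R)
  have hB : volume B = ENNReal.ofReal (b - a) * ENNReal.ofReal (2 * R) ^ m := by
    rw [Real.volume_Icc_pi, Fin.prod_univ_succ]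
    simp [two_mul]
  have hsub : S ∩ {x | x ⟨0, hn⟩ ∈ Set.Icc a b} ⊆ (@WithLp.ofLp 2 (Fin (m + 1) → ℝ)) ⁻¹' B := by
    rintro x ⟨hxS, hx⟩
    constructor
    · intro i
      refine Fin.cases ?_ (fun j => ?_) i
      · simpa using hx.1
      · simpa using (abs_le.1 (hS x hxS j.succ)).1
    · intro i
      refine Fin.cases ?_ (fun j => ?_) i
      · simpa using hx.2
      · simpa using (abs_le.1 (hS x hxS j.succ)).2
  refine (measure_mono hsub).trans (le_of_eq ?_)
  rw [(PiLp.volume_preserving_ofLp (Fin (m + 1))).measure_preimage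
    measurableSet_Icc.nullMeasurableSet, hB]
  rfl

theorem mem_uIcc_add_right_iff (c t h : ℝ) :
    c ∈ Set.uIcc t (t + h) ↔ t ∈ Set.Icc (c - max h 0) (c - min h 0) := by
  rw [Set.mem_uIcc, Set.mem_Icc]
  rcases le_total h 0 with h0 | h0
  · rw [max_eq_right h0, min_eq_left h0]
    constructor
    · rintro (⟨h1, h2⟩ | ⟨h1, h2⟩) <;> constructor <;> linarith
    · rintro ⟨h1, h2⟩
      right
      constructor <;> linarith
  · rw [max_eq_left h0, min_eq_right h0]
    constructor
    · rintro (⟨h1, h2⟩ | ⟨h1, h2⟩) <;> constructor <;> linarith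
    · rintro ⟨h1, h2⟩
      left
      constructor <;> linarith

/-- The `L¹` modulus of continuity of the averaged sign is linear, uniformly in `ε`. -/
theorem setLIntegral_abs_avgSign_add_sub_le {n : ℕ} (hn : 0 < n) {R ε : ℝ}
    {S : Set (EuclideanSpace ℝ (Fin n))} (hSm : MeasurableSet S) (hS : ∀ x ∈ S, ∀ i, |x i| ≤ R)
    {φ : ℝ → ℝ} (hφ : Continuous φ) {Z : Finset ℝ}
    (hZ : ∀ t, |t| ≤ R + 1 → φ t = 0 → t ∈ Z) (hε : ε ∈ Set.Ioo (0 : ℝ) 1) {h : ℝ}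
    (hSh : ∀ x ∈ S, |x ⟨0, hn⟩ + h| ≤ R) :
    ∫⁻ x in S, ENNReal.ofReal |avgSign φ ε (x ⟨0, hn⟩) - avgSign φ ε (x ⟨0, hn⟩ + h)|
      ≤ 2 * Z.card * ENNReal.ofReal (2 * R) ^ (n - 1) * ENNReal.ofReal |h| := by
  have hε0 := hε.1
  let D : ℝ → Set (EuclideanSpace ℝ (Fin n) × ℝ) := fun z =>
    {q | q.1 ⟨0, hn⟩ ∈ Set.Icc (z - q.2 - max h 0) (z - q.2 - min h 0)}
  have hproj : Measurable fun q : EuclideanSpace ℝ (Fin n) × ℝ => q.1 ⟨0, hn⟩ := by fun_prop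
  have hDm : ∀ z, MeasurableSet (D z) := fun z =>
    (measurableSet_le (by fun_prop) hproj).inter (measurableSet_le hproj (by fun_prop))
  have hind : ∀ (x : EuclideanSpace ℝ (Fin n)) (τ z : ℝ),
      (Set.uIcc (x ⟨0, hn⟩ + τ) (x ⟨0, hn⟩ + h + τ)).indicator (1 : ℝ → ℝ≥0∞) z
        = (D z).indicator 1 (x, τ) := fun x τ z => by
    have : z ∈ Set.uIcc (x ⟨0, hn⟩ + τ) (x ⟨0, hn⟩ + h + τ) ↔ (x, τ) ∈ D z := by
      rw [show x ⟨0, hn⟩ + h + τ = x ⟨0, hn⟩ + τ + h by ring, mem_uIcc_add_right_iff]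
      simp only [D, Set.mem_Icc, Set.mem_ofPred_eq]
      constructor <;> rintro ⟨h1, h2⟩ <;> constructor <;> linarith
    by_cases hmem : (x, τ) ∈ D z
    · rw [Set.indicator_of_mem hmem, Set.indicator_of_mem (this.2 hmem), Pi.one_apply,
        Pi.one_apply]
    · rw [Set.indicator_of_notMem hmem, Set.indicator_of_notMem (mt this.1 hmem)]
  have hslab : ∀ τ z : ℝ, ∫⁻ x in S, (D z).indicator 1 (x, τ)
      ≤ ENNReal.ofReal |h| * ENNReal.ofReal (2 * R) ^ (n - 1) := fun τ z => by
    have hm : MeasurableSet {x : EuclideanSpace ℝ (Fin n) | (x, τ) ∈ D z} :=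
      (hDm z).preimage (measurable_id.prodMk measurable_const)
    calc ∫⁻ x in S, (D z).indicator 1 (x, τ)
        = ∫⁻ x in S, {x | (x, τ) ∈ D z}.indicator 1 x := rfl
      _ = volume (S ∩ {x | (x, τ) ∈ D z}) := by
          rw [lintegral_indicator_one hm, Measure.restrict_apply hm, Set.inter_comm]
      _ ≤ ENNReal.ofReal (z - τ - min h 0 - (z - τ - max h 0)) *
          ENNReal.ofReal (2 * R) ^ (n - 1) := volume_inter_slab_le hn hS _ _
      _ = _ := by
          congr 2
          rcases le_total h 0 with h0 | h0
          · rw [max_eq_right h0, min_eq_left h0, abs_of_nonpos h0]; ring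
          · rw [max_eq_left h0, min_eq_right h0, abs_of_nonneg h0]; ring
  have hmeas : Measurable fun q : EuclideanSpace ℝ (Fin n) × ℝ =>
      ∑ z ∈ Z, 2 * (D z).indicator (1 : EuclideanSpace ℝ (Fin n) × ℝ → ℝ≥0∞) q :=
    Finset.measurable_fun_sum _ fun z _ => (measurable_one.indicator (hDm z)).const_mul 2
  calc ∫⁻ x in S, ENNReal.ofReal |avgSign φ ε (x ⟨0, hn⟩) - avgSign φ ε (x ⟨0, hn⟩ + h)|
      ≤ ∫⁻ x in S, ENNReal.ofReal (1 / (2 * ε)) * ∫⁻ τ in Set.Ioc (-ε) ε,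
          ∑ z ∈ Z, 2 * (D z).indicator 1 (x, τ) := by
        refine setLIntegral_mono' hSm fun x hx => ?_
        simp_rw [← hind]
        exact ofReal_abs_avgSign_sub_le hφ hZ hε (hS x hx _) (hSh x hx)
    _ = ENNReal.ofReal (1 / (2 * ε)) * ∫⁻ τ in Set.Ioc (-ε) ε, ∫⁻ x in S,
          ∑ z ∈ Z, 2 * (D z).indicator 1 (x, τ) := by
        rw [lintegral_const_mul _ hmeas.lintegral_prod_right', lintegral_lintegral_swap]
        exact hmeas.aemeasurable
    _ ≤ ENNReal.ofReal (1 / (2 * ε)) * ∫⁻ _ in Set.Ioc (-ε) ε,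
          Z.card * (2 * (ENNReal.ofReal |h| * ENNReal.ofReal (2 * R) ^ (n - 1))) := by
        gcongr with τ
        have hsec : ∀ z, Measurable fun x : EuclideanSpace ℝ (Fin n) =>
            (D z).indicator (1 : EuclideanSpace ℝ (Fin n) × ℝ → ℝ≥0∞) (x, τ) := fun z =>
          (measurable_one.indicator (hDm z)).comp (measurable_id.prodMk measurable_const)
        rw [lintegral_finsetSum _ fun z _ => (hsec z).const_mul 2, ← nsmul_eq_mul]
        refine Finset.sum_le_card_nsmul _ _ _ fun z _ => ?_
        rw [lintegral_const_mul _ (hsec z)]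
        gcongr
        exact hslab τ z
    _ = ENNReal.ofReal (1 / (2 * ε)) * ENNReal.ofReal (2 * ε) *
          (Z.card * (2 * (ENNReal.ofReal |h| * ENNReal.ofReal (2 * R) ^ (n - 1)))) := by
        rw [lintegral_const, Measure.restrict_apply_univ, Real.volume_Ioc,
          show ε - -ε = 2 * ε by ring]
        ring
    _ = _ := by
        rw [← ENNReal.ofReal_mul (by positivity), one_div_mul_cancel (by positivity),
          ENNReal.ofReal_one]
        ring

/-- The potential energy of the averaged sign is of order `ε`. -/
theorem potentialTerm_avgSign_le {n : ℕ} (hn : 0 < n) {R ε M : ℝ}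
    {S : Set (EuclideanSpace ℝ (Fin n))} (hSm : MeasurableSet S) (hS : ∀ x ∈ S, ∀ i, |x i| ≤ R)
    {φ : ℝ → ℝ} (hφ : Continuous φ) {Z : Finset ℝ}
    (hZ : ∀ t, |t| ≤ R + 1 → φ t = 0 → t ∈ Z) (hε : ε ∈ Set.Ioo (0 : ℝ) 1) {W : ℝ → ℝ}
    (hW1 : W 1 = 0) (hW2 : W (-1) = 0) (hM : ∀ t, |t| ≤ 1 → W t ≤ M) :
    potentialTerm n S W (fun x => avgSign φ ε (x ⟨0, hn⟩))
      ≤ ENNReal.ofReal M *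
        (Z.card * (ENNReal.ofReal (2 * ε) * ENNReal.ofReal (2 * R) ^ (n - 1))) := by
  obtain ⟨hε0, hε1⟩ := hε
  let E : ℝ → Set (EuclideanSpace ℝ (Fin n)) := fun z =>
    {x | x ⟨0, hn⟩ ∈ Set.Icc (z - ε) (z + ε)}
  have hEm : ∀ z, MeasurableSet (E z) := fun z => by
    have hproj : Measurable fun x : EuclideanSpace ℝ (Fin n) => x ⟨0, hn⟩ := by fun_prop
    exact hproj measurableSet_Icc
  have hpt : ∀ x ∈ S, ENNReal.ofReal (W (avgSign φ ε (x ⟨0, hn⟩)))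
      ≤ ENNReal.ofReal M * ∑ z ∈ Z, (E z).indicator 1 x := by
    intro x hx
    by_cases h : ∀ z ∈ Set.Icc (x ⟨0, hn⟩ - ε) (x ⟨0, hn⟩ + ε), φ z ≠ 0
    · rcases avgSign_eq_of_no_zero hφ hε0 h with h1 | h1 <;> simp [h1, hW1, hW2]
    · push Not at h
      obtain ⟨z, hz, hz0⟩ := h
      have hx0 := abs_le.1 (hS x hx ⟨0, hn⟩)
      have hzZ : z ∈ Z :=
        hZ z (abs_le.2 ⟨by linarith [hz.1], by linarith [hz.2]⟩) hz0
      have hxE : x ∈ E z := ⟨by linarith [hz.2], by linarith [hz.1]⟩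
      calc ENNReal.ofReal (W (avgSign φ ε (x ⟨0, hn⟩))) ≤ ENNReal.ofReal M * 1 := by
            rw [mul_one]
            exact ENNReal.ofReal_le_ofReal (hM _ (abs_avgSign_le_one φ hε0 _))
        _ = ENNReal.ofReal M * (E z).indicator 1 x := by simp [hxE]
        _ ≤ _ := by
            gcongr
            exact Finset.single_le_sum
              (f := fun z => (E z).indicator (1 : EuclideanSpace ℝ (Fin n) → ℝ≥0∞) x)
              (fun _ _ => zero_le) hzZ
  calc potentialTerm n S W (fun x => avgSign φ ε (x ⟨0, hn⟩))
      ≤ ∫⁻ x in S, ENNReal.ofReal M * ∑ z ∈ Z, (E z).indicator 1 x :=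
        setLIntegral_mono' hSm hpt
    _ = ENNReal.ofReal M * ∑ z ∈ Z, volume (S ∩ E z) := by
        rw [lintegral_const_mul _ (Finset.measurable_fun_sum _ fun z _ =>
            measurable_one.indicator (hEm z)),
          lintegral_finsetSum _ fun z _ => measurable_one.indicator (hEm z)]
        congr 1
        refine Finset.sum_congr rfl fun z _ => ?_
        rw [lintegral_indicator_one (hEm z), Measure.restrict_apply (hEm z), Set.inter_comm]
    _ ≤ _ := by
        gcongr
        rw [← nsmul_eq_mul]
        refine Finset.sum_le_card_nsmul _ _ _ fun z _ => ?_
        refine (volume_inter_slab_le hn hS _ _).trans_eq ?_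
        rw [show z + ε - (z - ε) = 2 * ε by ring]

/-- Integrability of the singular kernel, gaining one power. -/
theorem setLIntegral_ball_norm_rpow_lt_top {n : ℕ} (hn : 0 < n) {s : ℝ} (hs : s < 1 / 2) (r : ℝ) :
    ∫⁻ h in Metric.ball (0 : EuclideanSpace ℝ (Fin n)) r,
      ENNReal.ofReal (‖h‖ ^ (1 - ((n : ℝ) + 2 * s))) < ∞ := by
  have : Nonempty (Fin n) := ⟨⟨0, hn⟩⟩
  have hint : IntegrableOn (fun h : EuclideanSpace ℝ (Fin n) => ‖h‖ ^ (1 - ((n : ℝ) + 2 * s)))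
      (Metric.ball 0 r) volume := by
    rw [integrableOn_fun_norm_addHaar volume (f := fun y : ℝ => y ^ (1 - ((n : ℝ) + 2 * s)))]
    have hcongr : Set.EqOn (fun y : ℝ => y ^ (-(2 * s)))
        (fun y => y ^ (Module.finrank ℝ (EuclideanSpace ℝ (Fin n)) - 1) •
          y ^ (1 - ((n : ℝ) + 2 * s))) (Set.Ioo 0 r) := by
      intro y hy
      simp only [finrank_euclideanSpace, Fintype.card_fin, smul_eq_mul]
      rw [← Real.rpow_natCast, ← Real.rpow_add hy.1, Nat.cast_sub (by omega : 1 ≤ n)]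
      congr 1
      push_cast
      ring
    refine IntegrableOn.congr_fun ?_ hcongr measurableSet_Ioo
    rcases le_or_gt r 0 with hr | hr
    · simp [Set.Ioo_eq_empty_of_le hr]
    · exact (intervalIntegral.integrableOn_Ioo_rpow_iff hr).2 (by linarith)
  exact hint.lintegral_lt_top

/-- A uniform bound for the Gagliardo energy of the averaged sign. -/
theorem gagliardo_avgSign_le {n : ℕ} (hn : 0 < n) {s R ε : ℝ}
    {S : Set (EuclideanSpace ℝ (Fin n))} (hSm : MeasurableSet S) (hS : ∀ x ∈ S, ‖x‖ < R)
    {φ : ℝ → ℝ} (hφ : Continuous φ) {Z : Finset ℝ}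
    (hZ : ∀ t, |t| ≤ R + 1 → φ t = 0 → t ∈ Z) (hε : ε ∈ Set.Ioo (0 : ℝ) 1) :
    gagliardo n s S (fun x => avgSign φ ε (x ⟨0, hn⟩))
      ≤ 4 * Z.card * ENNReal.ofReal (2 * R) ^ (n - 1) *
        ∫⁻ h in Metric.ball (0 : EuclideanSpace ℝ (Fin n)) (2 * R),
          ENNReal.ofReal (‖h‖ ^ (1 - ((n : ℝ) + 2 * s))) := by
  set p : ℝ := (n : ℝ) + 2 * s
  set g : ℝ → ℝ := avgSign φ ε
  have hgc : Continuous g := continuous_avgSign hφ ε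
  have hcoord : ∀ x ∈ S, ∀ i, |x i| ≤ R := fun x hx i =>
    (by simpa using PiLp.norm_apply_le x i : |x i| ≤ ‖x‖).trans (hS x hx).le
  let G : EuclideanSpace ℝ (Fin n) → EuclideanSpace ℝ (Fin n) → ℝ≥0∞ := fun x h =>
    2 * (ENNReal.ofReal (‖h‖ ^ (-p)) *
      ENNReal.ofReal |g (x ⟨0, hn⟩) - g (x ⟨0, hn⟩ + h ⟨0, hn⟩)|)
  have hGm : Measurable (Function.uncurry G) := by
    have h1 : Measurable fun q : EuclideanSpace ℝ (Fin n) × EuclideanSpace ℝ (Fin n) =>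
        ENNReal.ofReal (‖q.2‖ ^ (-p)) := by fun_prop
    have h2 : Continuous fun q : EuclideanSpace ℝ (Fin n) × EuclideanSpace ℝ (Fin n) =>
        |g (q.1 ⟨0, hn⟩) - g (q.1 ⟨0, hn⟩ + q.2 ⟨0, hn⟩)| := by fun_prop
    exact (h1.mul h2.measurable.ennreal_ofReal).const_mul 2
  have hSSm : MeasurableSet
      {q : EuclideanSpace ℝ (Fin n) × EuclideanSpace ℝ (Fin n) | q.1 ∈ S ∧ q.1 + q.2 ∈ S} :=
    (hSm.preimage measurable_fst).inter (hSm.preimage (measurable_fst.add measurable_snd))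
  have hpt : ∀ x h : EuclideanSpace ℝ (Fin n),
      ENNReal.ofReal (|g (x ⟨0, hn⟩) - g ((x + h) ⟨0, hn⟩)| ^ 2 / dist x (x + h) ^ p) ≤ G x h := by
    intro x h
    have h1 := abs_le.1 (abs_avgSign_le_one φ hε.1 (x ⟨0, hn⟩))
    have h2 := abs_le.1 (abs_avgSign_le_one φ hε.1 (x ⟨0, hn⟩ + h ⟨0, hn⟩))
    rw [dist_self_add_right, PiLp.add_apply, div_eq_mul_inv, ← Real.rpow_neg (norm_nonneg _)]
    set d : ℝ := |g (x ⟨0, hn⟩) - g (x ⟨0, hn⟩ + h ⟨0, hn⟩)|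
    have hd2 : d ≤ 2 := abs_le.2 ⟨by linarith, by linarith⟩
    have hd0 : 0 ≤ d := abs_nonneg _
    have hk0 : 0 ≤ ‖h‖ ^ (-p) := by positivity
    calc ENNReal.ofReal (d ^ 2 * ‖h‖ ^ (-p)) ≤ ENNReal.ofReal (2 * (‖h‖ ^ (-p) * d)) := by
          apply ENNReal.ofReal_le_ofReal
          nlinarith [mul_nonneg (mul_nonneg hd0 (sub_nonneg.2 hd2)) hk0]
      _ = G x h := by
          rw [ENNReal.ofReal_mul zero_le_two, ENNReal.ofReal_mul hk0, ENNReal.ofReal_ofNat]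
  have hinner : ∀ h : EuclideanSpace ℝ (Fin n),
      ∫⁻ x, {q : EuclideanSpace ℝ (Fin n) × EuclideanSpace ℝ (Fin n) |
          q.1 ∈ S ∧ q.1 + q.2 ∈ S}.indicator (Function.uncurry G) (x, h)
        ≤ (Metric.ball (0 : EuclideanSpace ℝ (Fin n)) (2 * R)).indicator (fun h =>
          4 * Z.card * ENNReal.ofReal (2 * R) ^ (n - 1) * ENNReal.ofReal (‖h‖ ^ (1 - p))) h := by
    intro h
    set T : Set (EuclideanSpace ℝ (Fin n)) := {x | x ∈ S ∧ x + h ∈ S}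
    have hTm : MeasurableSet T :=
      hSm.inter (hSm.preimage (measurable_id.add measurable_const))
    have hrw : ∫⁻ x, {q : EuclideanSpace ℝ (Fin n) × EuclideanSpace ℝ (Fin n) |
          q.1 ∈ S ∧ q.1 + q.2 ∈ S}.indicator (Function.uncurry G) (x, h)
        = ∫⁻ x in T, G x h := by
      rw [← lintegral_indicator hTm]
      rfl
    rw [hrw]
    by_cases hh : h ∈ Metric.ball (0 : EuclideanSpace ℝ (Fin n)) (2 * R)
    · rw [Set.indicator_of_mem hh]
      have hGx : Measurable fun x : EuclideanSpace ℝ (Fin n) =>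
          ENNReal.ofReal |g (x ⟨0, hn⟩) - g (x ⟨0, hn⟩ + h ⟨0, hn⟩)| := by
        have : Continuous fun x : EuclideanSpace ℝ (Fin n) =>
          |g (x ⟨0, hn⟩) - g (x ⟨0, hn⟩ + h ⟨0, hn⟩)| := by fun_prop
        exact this.measurable.ennreal_ofReal
      have hk : ENNReal.ofReal (‖h‖ ^ (-p)) * ENNReal.ofReal |h ⟨0, hn⟩|
          ≤ ENNReal.ofReal (‖h‖ ^ (1 - p)) := by
        rw [← ENNReal.ofReal_mul (by positivity)]
        apply ENNReal.ofReal_le_ofReal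
        rcases eq_or_ne h 0 with rfl | h0
        · simp only [PiLp.zero_apply, abs_zero, mul_zero]
          positivity
        · rw [show 1 - p = -p + 1 by ring, Real.rpow_add (norm_pos_iff.2 h0), Real.rpow_one]
          gcongr
          simpa using PiLp.norm_apply_le h ⟨0, hn⟩
      calc ∫⁻ x in T, G x h
          = 2 * (ENNReal.ofReal (‖h‖ ^ (-p)) * ∫⁻ x in T,
              ENNReal.ofReal |g (x ⟨0, hn⟩) - g (x ⟨0, hn⟩ + h ⟨0, hn⟩)|) := by
            rw [lintegral_const_mul _ (hGx.const_mul _), lintegral_const_mul _ hGx]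
        _ ≤ 2 * (ENNReal.ofReal (‖h‖ ^ (-p)) *
              (2 * Z.card * ENNReal.ofReal (2 * R) ^ (n - 1) * ENNReal.ofReal |h ⟨0, hn⟩|)) := by
            gcongr
            exact setLIntegral_abs_avgSign_add_sub_le hn hTm (fun x hx => hcoord x hx.1) hφ hZ hε
              (fun x hx => hcoord _ hx.2 _)
        _ = 4 * Z.card * ENNReal.ofReal (2 * R) ^ (n - 1) *
              (ENNReal.ofReal (‖h‖ ^ (-p)) * ENNReal.ofReal |h ⟨0, hn⟩|) := by ring
        _ ≤ _ := by gcongr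
    · have hTe : T = ∅ := by
        refine Set.eq_empty_iff_forall_notMem.2 fun x hx => hh ?_
        rw [mem_ball_zero_iff]
        calc ‖h‖ = ‖(x + h) - x‖ := by rw [add_sub_cancel_left]
          _ ≤ ‖x + h‖ + ‖x‖ := norm_sub_le _ _
          _ < 2 * R := by linarith [hS _ hx.1, hS _ hx.2]
      simp [hTe]
  calc gagliardo n s S (fun x => g (x ⟨0, hn⟩))
      ≤ ∫⁻ x, ∫⁻ h, {q : EuclideanSpace ℝ (Fin n) × EuclideanSpace ℝ (Fin n) |
          q.1 ∈ S ∧ q.1 + q.2 ∈ S}.indicator (Function.uncurry G) (x, h) := by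
        unfold gagliardo
        rw [← lintegral_indicator hSm]
        refine lintegral_mono fun x => ?_
        by_cases hx : x ∈ S
        · rw [Set.indicator_of_mem hx, ← lintegral_indicator hSm, ← lintegral_add_left_eq_self _ x]
          refine lintegral_mono fun h => ?_
          by_cases hxh : x + h ∈ S
          · rw [Set.indicator_of_mem hxh, Set.indicator_of_mem (by exact ⟨hx, hxh⟩)]
            exact hpt x h
          · simp [hxh]
        · simp [hx]
    _ = ∫⁻ h, ∫⁻ x, {q : EuclideanSpace ℝ (Fin n) × EuclideanSpace ℝ (Fin n) |
          q.1 ∈ S ∧ q.1 + q.2 ∈ S}.indicator (Function.uncurry G) (x, h) := by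
        apply lintegral_lintegral_swap
        exact (hGm.indicator hSSm).aemeasurable
    _ ≤ _ := lintegral_mono hinner
    _ = _ := by
        rw [lintegral_indicator measurableSet_ball, lintegral_const_mul]
        fun_prop

/-- for `s ∈ (0,1/2)`, a bound on `F_ε` over `S_ε^k`, uniform in `ε ∈ (0,1)`. -/
theorem energy_bound_on_Sset_small_s {n : ℕ} (hn : 0 < n) (s : ℝ)
    (hs : s ∈ Set.Ioo (0 : ℝ) (1 / 2))
    (Ω : Set (EuclideanSpace ℝ (Fin n))) (hΩo : IsOpen Ω) (hΩb : Bornology.IsBounded Ω)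
    (W : ℝ → ℝ) (hW : IsDoubleWell W) (k : ℕ) :
    ∃ c : ℝ, 0 < c ∧ ∀ ε ∈ Set.Ioo (0 : ℝ) 1, ∀ f ∈ Sset n k hn ε,
      gagliardo n s Ω f + ENNReal.ofReal (ε ^ (-(2 * s))) * potentialTerm n Ω W f
        ≤ ENNReal.ofReal c := by
  obtain ⟨hW2, -, -, hW1, hWm1, -⟩ := hW
  obtain ⟨R, hR⟩ := hΩb.subset_ball 0
  have hΩR : ∀ x ∈ Ω, ‖x‖ < R := fun x hx => mem_ball_zero_iff.1 (hR hx)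
  have hcoord : ∀ x ∈ Ω, ∀ i, |x i| ≤ R := fun x hx i =>
    (by simpa using PiLp.norm_apply_le x i : |x i| ≤ ‖x‖).trans (hΩR x hx).le
  obtain ⟨M, hM⟩ : ∃ M, ∀ t, |t| ≤ 1 → W t ≤ M := by
    obtain ⟨M, hM⟩ := (isCompact_Icc (a := (-1 : ℝ)) (b := 1)).bddAbove_image
      hW2.continuous.continuousOn
    exact ⟨M, fun t ht => hM ⟨t, abs_le.1 ht, rfl⟩⟩
  obtain ⟨N, hN⟩ := exists_card_zeros_cosPoly_le k (R + 1)
  set I : ℝ≥0∞ := ∫⁻ h in Metric.ball (0 : EuclideanSpace ℝ (Fin n)) (2 * R),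
    ENNReal.ofReal (‖h‖ ^ (1 - ((n : ℝ) + 2 * s)))
  have hItop : I < ∞ := setLIntegral_ball_norm_rpow_lt_top hn hs.2 _
  set C : ℝ≥0∞ := 4 * N * ENNReal.ofReal (2 * R) ^ (n - 1) * I +
    ENNReal.ofReal M * (N * (2 * ENNReal.ofReal (2 * R) ^ (n - 1))) with hC
  have hCtop : C ≠ ∞ := by finiteness
  refine ⟨C.toReal + 1, by positivity, ?_⟩
  rintro ε hε f ⟨lam, hlam, hf⟩
  obtain rfl : f = fun x => avgSign (cosPoly k lam) ε (x ⟨0, hn⟩) := funext hf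
  obtain ⟨Z, hZN, hZ⟩ := hN lam (by rintro rfl; simp at hlam)
  have hφ := cosPoly_continuous k lam
  have hεpow : ENNReal.ofReal (ε ^ (-(2 * s))) * ENNReal.ofReal (2 * ε) ≤ 2 := by
    rw [← ENNReal.ofReal_mul (Real.rpow_nonneg hε.1.le _), ← ENNReal.ofReal_ofNat]
    apply ENNReal.ofReal_le_ofReal
    have h1 : ε ^ (-(2 * s)) * ε = ε ^ (1 - 2 * s) := by
      rw [show 1 - 2 * s = -(2 * s) + 1 by ring, Real.rpow_add hε.1, Real.rpow_one]
    have h2 : ε ^ (1 - 2 * s) ≤ 1 := Real.rpow_le_one hε.1.le hε.2.le (by linarith [hs.2])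
    linarith
  calc _ ≤ 4 * Z.card * ENNReal.ofReal (2 * R) ^ (n - 1) * I +
        ENNReal.ofReal (ε ^ (-(2 * s))) * (ENNReal.ofReal M *
          (Z.card * (ENNReal.ofReal (2 * ε) * ENNReal.ofReal (2 * R) ^ (n - 1)))) := by
        gcongr
        · exact gagliardo_avgSign_le hn hΩo.measurableSet hΩR hφ hZ hε
        · exact potentialTerm_avgSign_le hn hΩo.measurableSet hcoord hφ hZ hε hW1 hWm1 hM
    _ = 4 * Z.card * ENNReal.ofReal (2 * R) ^ (n - 1) * I +
        ENNReal.ofReal M * (Z.card * ((ENNReal.ofReal (ε ^ (-(2 * s))) * ENNReal.ofReal (2 * ε)) *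
          ENNReal.ofReal (2 * R) ^ (n - 1))) := by ring
    _ ≤ C := by
        rw [hC]
        gcongr
    _ = ENNReal.ofReal C.toReal := (ENNReal.ofReal_toReal hCtop).symm
    _ ≤ ENNReal.ofReal (C.toReal + 1) := ENNReal.ofReal_le_ofReal (by linarith)
end
end

section
/- Let s ∈ (0,1) and p ∈ [1,+∞) with sp < n, and let q ∈ [1, p*) where p* = np/(n−sp). Let Ω ⊂ ℝ^n be a bounded open set which is an extension domain for W^{s,p}, i.e. there is C > 0 such that every u ∈ W^{s,p}(Ω) has an extension ũ ∈ W^{s,p}(ℝ^n) with ũ = u on Ω and ‖ũ‖_{W^{s,p}(ℝ^n)} ≤ C ‖u‖_{W^{s,p}(Ω)}. Let 𝓘 be a bounded subset of L^p(Ω) with sup_{f ∈ 𝓘} ∫_Ω∫_Ω |f(x)−f(y)|^p/|x−y|^{n+sp} dx dy < ∞. Then 𝓘 is relatively compact (totally bounded) in L^q(Ω). -/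
open MeasureTheory Real Set
open scoped ENNReal

noncomputable section

/-- The `p`-th power of the `W^{s,p}` norm on a set `A`,
`∫_A |u|^p + ∫_A∫_A |u(x)−u(y)|^p/|x−y|^{n+sp}`, valued in `ℝ≥0∞`. -/
def fracNormPow (n : ℕ) (s p : ℝ) (A : Set (EuclideanSpace ℝ (Fin n)))
    (u : EuclideanSpace ℝ (Fin n) → ℝ) : ℝ≥0∞ :=
  (∫⁻ x in A, ENNReal.ofReal (|u x| ^ p))
    + ∫⁻ x in A, ∫⁻ y in A, ENNReal.ofReal (|u x - u y| ^ p / dist x y ^ ((n : ℝ) + s * p))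

/-- `Ω` is an extension domain for `W^{s,p}`: every `u ∈ W^{s,p}(Ω)` extends to a function
`ũ ∈ W^{s,p}(ℝ^n)` with `‖ũ‖_{W^{s,p}(ℝ^n)} ≤ C ‖u‖_{W^{s,p}(Ω)}`. -/
def IsExtensionDomain (n : ℕ) (s p : ℝ) (Ω : Set (EuclideanSpace ℝ (Fin n))) : Prop :=
  ∃ C : ℝ, 0 < C ∧ ∀ u : EuclideanSpace ℝ (Fin n) → ℝ, Measurable u →
    fracNormPow n s p Ω u < ⊤ →
    ∃ ut : EuclideanSpace ℝ (Fin n) → ℝ, Measurable ut ∧ (∀ x ∈ Ω, ut x = u x) ∧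
      fracNormPow n s p Set.univ ut ^ (1 / p)
        ≤ ENNReal.ofReal C * fracNormPow n s p Ω u ^ (1 / p)

theorem ofReal_abs_rpow (x : ℝ) {p : ℝ} (hp : 0 ≤ p) :
    ENNReal.ofReal (|x| ^ p) = ‖x‖ₑ ^ p := by
  rw [← ENNReal.ofReal_rpow_of_nonneg (abs_nonneg x) hp, Real.enorm_eq_ofReal_abs]

/-- Jensen's inequality for `t ↦ t ^ p` and a probability measure. -/
theorem lintegral_enorm_rpow_le {α : Type*} [MeasurableSpace α] (ν : Measure α)
    [IsProbabilityMeasure ν] {f : α → ℝ} (hf : AEStronglyMeasurable f ν) {p : ℝ} (hp : 1 ≤ p) :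
    (∫⁻ x, ‖f x‖ₑ ∂ν) ^ p ≤ ∫⁻ x, ‖f x‖ₑ ^ p ∂ν := by
  have hp0 : 0 < p := by linarith
  have h := eLpNorm'_le_eLpNorm'_of_exponent_le one_pos hp ν hf
  simp only [eLpNorm', ENNReal.rpow_one, div_one] at h
  calc (∫⁻ x, ‖f x‖ₑ ∂ν) ^ p ≤ ((∫⁻ x, ‖f x‖ₑ ^ p ∂ν) ^ (1 / p)) ^ p := by gcongr
    _ = _ := by rw [← ENNReal.rpow_mul, one_div_mul_cancel hp0.ne', ENNReal.rpow_one]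

theorem enorm_integral_sub_rpow_le {α : Type*} [MeasurableSpace α] (ν₁ ν₂ : Measure α)
    [IsProbabilityMeasure ν₁] [IsProbabilityMeasure ν₂] {u : α → ℝ} (hu : Measurable u)
    (h₁ : Integrable u ν₁) (h₂ : Integrable u ν₂) {p : ℝ} (hp : 1 ≤ p) :
    ‖∫ x, u x ∂ν₁ - ∫ x, u x ∂ν₂‖ₑ ^ p ≤ ∫⁻ y, ∫⁻ z, ‖u y - u z‖ₑ ^ p ∂ν₂ ∂ν₁ := by
  have hm : Measurable fun w : α × α => u w.1 - u w.2 := by fun_prop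
  have hinteg : ∫ x, u x ∂ν₁ - ∫ x, u x ∂ν₂ = ∫ w, (u w.1 - u w.2) ∂(ν₁.prod ν₂) := by
    rw [integral_sub (h₁.comp_fst ν₂) (h₂.comp_snd ν₁), integral_fun_fst, integral_fun_snd]
    simp
  rw [hinteg]
  calc _ ≤ (∫⁻ w, ‖u w.1 - u w.2‖ₑ ∂(ν₁.prod ν₂)) ^ p := by
        gcongr
        exact enorm_integral_le_lintegral_enorm _
    _ ≤ ∫⁻ w, ‖u w.1 - u w.2‖ₑ ^ p ∂(ν₁.prod ν₂) :=
        lintegral_enorm_rpow_le _ hm.aestronglyMeasurable hp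
    _ = _ := lintegral_prod _ (by fun_prop)

theorem isProbabilityMeasure_smul_restrict {α : Type*} [MeasurableSpace α] {μ : Measure α}
    {A : Set α} (h0 : μ A ≠ 0) (hA : μ A ≠ ⊤) :
    IsProbabilityMeasure ((μ.restrict A univ)⁻¹ • μ.restrict A) := by
  constructor
  simp [ENNReal.inv_mul_cancel h0 hA]

theorem enorm_setAverage_sub_rpow_le {α : Type*} [MeasurableSpace α] {μ : Measure α}
    {A B : Set α} (hA0 : μ A ≠ 0) (hA : μ A ≠ ⊤) (hB0 : μ B ≠ 0) (hB : μ B ≠ ⊤)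
    {u : α → ℝ} (hu : Measurable u) (h₁ : IntegrableOn u A μ) (h₂ : IntegrableOn u B μ)
    {p : ℝ} (hp : 1 ≤ p) :
    ‖⨍ x in A, u x ∂μ - ⨍ x in B, u x ∂μ‖ₑ ^ p
      ≤ (μ A)⁻¹ * (μ B)⁻¹ * ∫⁻ y in A, ∫⁻ z in B, ‖u y - u z‖ₑ ^ p ∂μ ∂μ := by
  have := isProbabilityMeasure_smul_restrict hA0 hA
  have := isProbabilityMeasure_smul_restrict hB0 hB
  have hB' : (μ B)⁻¹ ≠ ⊤ := by simp [hB0]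
  refine (enorm_integral_sub_rpow_le _ _ hu (h₁.integrable.smul_measure (by simp [hA0]))
    (h₂.integrable.smul_measure (by simp [hB0])) hp).trans_eq ?_
  simp only [lintegral_smul_measure, Measure.restrict_apply_univ, smul_eq_mul]
  rw [lintegral_const_mul' _ _ hB', mul_assoc]

theorem enorm_setAverage_rpow_le {α : Type*} [MeasurableSpace α] {μ : Measure α}
    {A : Set α} (hA0 : μ A ≠ 0) (hA : μ A ≠ ⊤) {u : α → ℝ} (hu : Measurable u)
    {p : ℝ} (hp : 1 ≤ p) :
    ‖⨍ x in A, u x ∂μ‖ₑ ^ p ≤ (μ A)⁻¹ * ∫⁻ y in A, ‖u y‖ₑ ^ p ∂μ := by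
  have := isProbabilityMeasure_smul_restrict hA0 hA
  calc _ ≤ (∫⁻ x, ‖u x‖ₑ ∂((μ.restrict A univ)⁻¹ • μ.restrict A)) ^ p := by
        gcongr
        exact enorm_integral_le_lintegral_enorm _
    _ ≤ ∫⁻ x, ‖u x‖ₑ ^ p ∂((μ.restrict A univ)⁻¹ • μ.restrict A) :=
        lintegral_enorm_rpow_le _ hu.aestronglyMeasurable hp
    _ = _ := by simp [lintegral_smul_measure]

/-- An `L^q` bound for the sum of a sequence of functions whose `L^q` norms decay
geometrically. -/
theorem lintegral_tsum_rpow_le {α : Type*} [MeasurableSpace α] {μ : Measure α}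
    {D : ℕ → α → ℝ≥0∞} (hD : ∀ k, Measurable (D k)) {q : ℝ} (hq : 0 < q) {θ M : ℝ≥0∞}
    (hθ0 : θ ≠ 0) (hθ : θ ≠ ⊤) (h : ∀ k, ∫⁻ x, D k x ^ q ∂μ ≤ M * (θ ^ (2 * q)) ^ k) :
    ∫⁻ x, (∑' k, D k x) ^ q ∂μ ≤ ((1 - θ)⁻¹) ^ q * (M * (1 - θ ^ q)⁻¹) := by
  have hθk0 : ∀ k, θ ^ k ≠ 0 := fun k => pow_ne_zero k hθ0
  have hθk : ∀ k, θ ^ k ≠ ⊤ := fun k => ENNReal.pow_ne_top hθ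
  have hpt : ∀ x, (∑' k, D k x) ^ q
      ≤ ((1 - θ)⁻¹) ^ q * ∑' k, ((θ ^ k)⁻¹ * D k x) ^ q := by
    intro x
    have hterm : ∀ k, D k x ≤ θ ^ k * (∑' k, ((θ ^ k)⁻¹ * D k x) ^ q) ^ (1 / q) := by
      intro k
      have h1 : (θ ^ k)⁻¹ * D k x ≤ (∑' k, ((θ ^ k)⁻¹ * D k x) ^ q) ^ (1 / q) := by
        rw [one_div, ENNReal.le_rpow_inv_iff hq]
        exact ENNReal.le_tsum k
      calc D k x = θ ^ k * ((θ ^ k)⁻¹ * D k x) := by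
            rw [← mul_assoc, ENNReal.mul_inv_cancel (hθk0 k) (hθk k), one_mul]
        _ ≤ _ := by gcongr
    calc (∑' k, D k x) ^ q
        ≤ (∑' k, θ ^ k * (∑' k, ((θ ^ k)⁻¹ * D k x) ^ q) ^ (1 / q)) ^ q := by
          gcongr with k
          exact hterm k
      _ = _ := by
          rw [ENNReal.tsum_mul_right, ENNReal.tsum_geometric, ENNReal.mul_rpow_of_nonneg _ _ hq.le,
            ← ENNReal.rpow_mul, one_div_mul_cancel hq.ne', ENNReal.rpow_one]
  have hθq0 : θ ^ q ≠ 0 := by simp [ENNReal.rpow_eq_zero_iff, hθ0, hθ]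
  have hθq : θ ^ q ≠ ⊤ := ENNReal.rpow_ne_top_of_nonneg hq.le hθ
  calc _ ≤ ∫⁻ x, ((1 - θ)⁻¹) ^ q * ∑' k, ((θ ^ k)⁻¹ * D k x) ^ q ∂μ := lintegral_mono hpt
    _ = ((1 - θ)⁻¹) ^ q * ∑' k, ∫⁻ x, ((θ ^ k)⁻¹ * D k x) ^ q ∂μ := by
        rw [lintegral_const_mul, lintegral_tsum]
        · exact fun k => by fun_prop
        · fun_prop
    _ ≤ ((1 - θ)⁻¹) ^ q * ∑' k, M * (θ ^ q) ^ k := by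
        gcongr with k
        simp only [ENNReal.mul_rpow_of_nonneg _ _ hq.le]
        rw [lintegral_const_mul _ (by fun_prop)]
        have e1 : ((θ ^ k)⁻¹) ^ q = ((θ ^ q) ^ k)⁻¹ := by
          rw [ENNReal.inv_rpow, ← ENNReal.rpow_natCast, ← ENNReal.rpow_natCast, ← ENNReal.rpow_mul,
            ← ENNReal.rpow_mul, mul_comm]
        have e2 : (θ ^ (2 * q)) ^ k = (θ ^ q) ^ k * (θ ^ q) ^ k := by
          rw [mul_comm, ENNReal.rpow_mul, ← mul_pow, ← sq]
          norm_num
        rw [e1]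
        calc _ ≤ ((θ ^ q) ^ k)⁻¹ * (M * (θ ^ (2 * q)) ^ k) := by gcongr; exact h k
          _ = ((θ ^ q) ^ k)⁻¹ * (θ ^ q) ^ k * (M * (θ ^ q) ^ k) := by rw [e2]; ring
          _ = _ := by
              rw [ENNReal.inv_mul_cancel (pow_ne_zero k hθq0) (ENNReal.pow_ne_top hθq), one_mul]
    _ = _ := by rw [ENNReal.tsum_mul_left, ENNReal.tsum_geometric]

/-- The inner integral of the Gagliardo seminorm. -/
def gagliardoDensity (n : ℕ) (s p : ℝ) (u : EuclideanSpace ℝ (Fin n) → ℝ)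
    (y : EuclideanSpace ℝ (Fin n)) : ℝ≥0∞ :=
  ∫⁻ z, ENNReal.ofReal (|u y - u z| ^ p / dist y z ^ ((n : ℝ) + s * p))

theorem measurable_gagliardoDensity {n : ℕ} {s p : ℝ} {u : EuclideanSpace ℝ (Fin n) → ℝ}
    (hu : Measurable u) : Measurable (gagliardoDensity n s p u) := by
  unfold gagliardoDensity
  refine Measurable.lintegral_prod_right' (f := fun w : EuclideanSpace ℝ (Fin n) × _ =>
    ENNReal.ofReal (|u w.1 - u w.2| ^ p / dist w.1 w.2 ^ ((n : ℝ) + s * p))) ?_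
  have h : Measurable fun w : EuclideanSpace ℝ (Fin n) × EuclideanSpace ℝ (Fin n) =>
    |u w.1 - u w.2| := by simp only [← Real.norm_eq_abs]; fun_prop
  exact ((h.pow_const p).div (measurable_dist.pow_const _)).ennreal_ofReal

theorem exists_enorm_setAverage_closedBall_sub_le (n : ℕ) {s p : ℝ} (hs : 0 < s) (hp : 1 ≤ p) :
    ∃ C : ℝ≥0∞, C ≠ ⊤ ∧ ∀ u : EuclideanSpace ℝ (Fin n) → ℝ, Measurable u →
      LocallyIntegrable u → ∀ (x a b : EuclideanSpace ℝ (Fin n)) (R ρ σ : ℝ), 0 < R →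
      R / 2 ≤ ρ → R / 2 ≤ σ → Metric.closedBall a ρ ⊆ Metric.closedBall x R →
      Metric.closedBall b σ ⊆ Metric.closedBall x R →
      ‖(⨍ y in Metric.closedBall a ρ, u y) - ⨍ y in Metric.closedBall b σ, u y‖ₑ ^ p
        ≤ C * ENNReal.ofReal (R ^ (s * p - n))
          * ∫⁻ y in Metric.closedBall x R, gagliardoDensity n s p u y := by
  set κ : ℝ≥0∞ := volume (Metric.ball (0 : EuclideanSpace ℝ (Fin n)) 1) with hκ
  have hκ0 : κ ≠ 0 := (Metric.measure_ball_pos volume _ one_pos).ne'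
  have hκt : κ ≠ ⊤ := measure_ball_lt_top.ne
  have hp0 : 0 < p := by linarith
  refine ⟨ENNReal.ofReal (2 ^ ((n : ℝ) + s * p) * 4 ^ n) * (κ⁻¹ * κ⁻¹), ?_, ?_⟩
  · exact ENNReal.mul_ne_top ENNReal.ofReal_ne_top (by simp [ENNReal.mul_eq_top, hκ0])
  intro u hu hloc x a b R ρ σ hR hρ hσ hA hB
  have hvol : ∀ (c : EuclideanSpace ℝ (Fin n)) (τ : ℝ), R / 2 ≤ τ →
      (volume (Metric.closedBall c τ))⁻¹ ≤ ENNReal.ofReal ((2 / R) ^ n) * κ⁻¹ := by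
    intro c τ hτ
    rw [Measure.addHaar_closedBall _ _ (by linarith), finrank_euclideanSpace_fin,
      ENNReal.mul_inv (Or.inr hκt) (Or.inr hκ0), ← ENNReal.ofReal_inv_of_pos (by
        have : 0 < τ := by linarith
        positivity)]
    gcongr
    rw [← inv_pow]
    have hτ0 : 0 < τ := by linarith
    gcongr
    rw [inv_le_comm₀ hτ0 (by positivity), inv_div]
    exact hτ
  have hpos : ∀ (c : EuclideanSpace ℝ (Fin n)) (τ : ℝ), R / 2 ≤ τ →
      volume (Metric.closedBall c τ) ≠ 0 := fun c τ hτ =>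
    (Metric.measure_closedBall_pos volume c (by linarith)).ne'
  have hfin : ∀ (c : EuclideanSpace ℝ (Fin n)) (τ : ℝ),
      volume (Metric.closedBall c τ) ≠ ⊤ := fun c τ => measure_closedBall_lt_top.ne
  have hinteg : ∀ (c : EuclideanSpace ℝ (Fin n)) (τ : ℝ),
      IntegrableOn u (Metric.closedBall c τ) := fun c τ =>
    hloc.integrableOn_isCompact (isCompact_closedBall c τ)
  have hkernel : ∫⁻ y in Metric.closedBall a ρ, ∫⁻ z in Metric.closedBall b σ, ‖u y - u z‖ₑ ^ p
      ≤ ENNReal.ofReal ((2 * R) ^ ((n : ℝ) + s * p))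
        * ∫⁻ y in Metric.closedBall x R, gagliardoDensity n s p u y := by
    calc _ ≤ ∫⁻ y in Metric.closedBall a ρ,
          ENNReal.ofReal ((2 * R) ^ ((n : ℝ) + s * p)) * gagliardoDensity n s p u y := by
          refine setLIntegral_mono' Metric.isClosed_closedBall.measurableSet fun y hy => ?_
          rw [gagliardoDensity, ← lintegral_const_mul' _ _ ENNReal.ofReal_ne_top]
          refine le_trans (setLIntegral_mono' Metric.isClosed_closedBall.measurableSet
            fun z hz => ?_) (setLIntegral_le_lintegral (Metric.closedBall b σ) _)
          rw [← ofReal_abs_rpow _ hp0.le, ← ENNReal.ofReal_mul (by positivity)]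
          refine ENNReal.ofReal_le_ofReal ?_
          rcases eq_or_ne y z with rfl | hyz
          · simp [Real.zero_rpow hp0.ne']
          have hd : dist y z ≤ 2 * R := by
            have h1 := Metric.mem_closedBall.1 (hA hy)
            have h2 := Metric.mem_closedBall.1 (hB hz)
            linarith [dist_triangle_right y z x]
          have hd0 : 0 < dist y z := dist_pos.2 hyz
          rw [mul_div_assoc', le_div_iff₀ (by positivity), mul_comm]
          gcongr
      _ = ENNReal.ofReal ((2 * R) ^ ((n : ℝ) + s * p)) *
          ∫⁻ y in Metric.closedBall a ρ, gagliardoDensity n s p u y :=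
          lintegral_const_mul' _ _ ENNReal.ofReal_ne_top
      _ ≤ _ := by gcongr
  refine (enorm_setAverage_sub_rpow_le (hpos a ρ hρ) (hfin a ρ) (hpos b σ hσ) (hfin b σ) hu
    (hinteg a ρ) (hinteg b σ) hp).trans ?_
  calc _ ≤ (ENNReal.ofReal ((2 / R) ^ n) * κ⁻¹) * (ENNReal.ofReal ((2 / R) ^ n) * κ⁻¹)
        * (ENNReal.ofReal ((2 * R) ^ ((n : ℝ) + s * p))
        * ∫⁻ y in Metric.closedBall x R, gagliardoDensity n s p u y) := by
        gcongr
        exacts [hvol a ρ hρ, hvol b σ hσ]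
    _ = (ENNReal.ofReal ((2 / R) ^ n) * ENNReal.ofReal ((2 / R) ^ n)
        * ENNReal.ofReal ((2 * R) ^ ((n : ℝ) + s * p))) * (κ⁻¹ * κ⁻¹)
        * ∫⁻ y in Metric.closedBall x R, gagliardoDensity n s p u y := by ring
    _ = (ENNReal.ofReal (2 ^ ((n : ℝ) + s * p) * 4 ^ n) * ENNReal.ofReal (R ^ (s * p - n)))
        * (κ⁻¹ * κ⁻¹) * ∫⁻ y in Metric.closedBall x R, gagliardoDensity n s p u y := by
        rw [← ENNReal.ofReal_mul (by positivity), ← ENNReal.ofReal_mul (by positivity),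
          ← ENNReal.ofReal_mul (by positivity)]
        congr 3
        rw [Real.mul_rpow (by norm_num) hR.le, Real.rpow_add hR, Real.rpow_sub hR,
          Real.rpow_natCast, div_pow, show (4 : ℝ) = 2 * 2 by norm_num, mul_pow]
        field_simp
    _ = _ := by ring

theorem measurableSet_dist_le (n : ℕ) (R : ℝ) : MeasurableSet
    {w : EuclideanSpace ℝ (Fin n) × EuclideanSpace ℝ (Fin n) | dist w.2 w.1 ≤ R} :=
  measurableSet_le (by fun_prop) measurable_const

theorem setLIntegral_closedBall_eq {n : ℕ} (h : EuclideanSpace ℝ (Fin n) → ℝ≥0∞) (R : ℝ)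
    (x : EuclideanSpace ℝ (Fin n)) : ∫⁻ y in Metric.closedBall x R, h y
      = ∫⁻ y, {w : EuclideanSpace ℝ (Fin n) × EuclideanSpace ℝ (Fin n) |
          dist w.2 w.1 ≤ R}.indicator (fun w => h w.2) (x, y) := by
  rw [← lintegral_indicator Metric.isClosed_closedBall.measurableSet]
  rfl

theorem measurable_setLIntegral_closedBall {n : ℕ} {h : EuclideanSpace ℝ (Fin n) → ℝ≥0∞}
    (hh : Measurable h) (R : ℝ) : Measurable fun x => ∫⁻ y in Metric.closedBall x R, h y := by
  simp_rw [setLIntegral_closedBall_eq]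
  exact ((hh.comp measurable_snd).indicator (measurableSet_dist_le n R)).lintegral_prod_right'

theorem lintegral_setLIntegral_closedBall_rpow_le {n : ℕ}
    {h : EuclideanSpace ℝ (Fin n) → ℝ≥0∞} (hh : Measurable h) {t : ℝ} (ht : 1 ≤ t)
    {R : ℝ} (hR : 0 < R) :
    ∫⁻ x, (∫⁻ y in Metric.closedBall x R, h y) ^ t
      ≤ volume (Metric.ball (0 : EuclideanSpace ℝ (Fin n)) 1) * ENNReal.ofReal (R ^ n)
        * (∫⁻ y, h y) ^ t := by
  set S := ∫⁻ y, h y with hS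
  have hfub : ∫⁻ x, ∫⁻ y in Metric.closedBall x R, h y
      = volume (Metric.ball (0 : EuclideanSpace ℝ (Fin n)) 1) * ENNReal.ofReal (R ^ n) * S := by
    simp_rw [setLIntegral_closedBall_eq]
    rw [lintegral_lintegral_swap (by
      exact ((hh.comp measurable_snd).indicator (measurableSet_dist_le n R)).aemeasurable), hS,
      ← lintegral_const_mul _ hh]
    refine lintegral_congr fun y => ?_
    have : (fun x => {w : EuclideanSpace ℝ (Fin n) × EuclideanSpace ℝ (Fin n) |
        dist w.2 w.1 ≤ R}.indicator (fun w => h w.2) (x, y))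
        = (Metric.closedBall y R).indicator fun _ => h y := by
      ext x
      simp [Set.indicator, dist_comm]
    rw [this, lintegral_indicator_const Metric.isClosed_closedBall.measurableSet,
      Measure.addHaar_closedBall _ _ hR.le, finrank_euclideanSpace_fin]
    ring
  have hsplit : ∀ a : ℝ≥0∞, a ^ t = a ^ (t - 1) * a := fun a => by
    conv_rhs => rw [← ENNReal.rpow_one a, ← ENNReal.rpow_mul, one_mul,
      ← ENNReal.rpow_add_of_nonneg _ _ (by linarith) zero_le_one]
    simp
  calc _ ≤ ∫⁻ x, S ^ (t - 1) * ∫⁻ y in Metric.closedBall x R, h y := by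
        refine lintegral_mono fun x => ?_
        rw [hsplit]
        have ht' : 0 ≤ t - 1 := by linarith
        gcongr
        exact setLIntegral_le_lintegral _ _
    _ = _ := by
        rw [lintegral_const_mul _ (measurable_setLIntegral_closedBall hh R), hfub, hsplit S]
        ring

/-- Approximation of `u` by its averages over nearby balls of radius `R / 2`, with an error in
`L^q` controlled by the Gagliardo seminorm and a positive power of `R`. -/
theorem exists_lintegral_enorm_sub_setAverage_rpow_le (n : ℕ) {s p q : ℝ} (hs : 0 < s)
    (hp : 1 ≤ p) (hpq : p ≤ q) (hβ : 0 < (s * p - n) * (q / p) + n) :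
    ∃ C : ℝ≥0∞, C ≠ ⊤ ∧ ∀ u : EuclideanSpace ℝ (Fin n) → ℝ, Measurable u →
      LocallyIntegrable u → ∀ (Ω : Set (EuclideanSpace ℝ (Fin n)))
      (ctr : EuclideanSpace ℝ (Fin n) → EuclideanSpace ℝ (Fin n)) (R : ℝ), MeasurableSet Ω →
      0 < R → (∀ x ∈ Ω, dist (ctr x) x ≤ R / 2) →
      ∫⁻ x in Ω, ‖u x - ⨍ y in Metric.closedBall (ctr x) (R / 2), u y‖ₑ ^ q
        ≤ C * ENNReal.ofReal (R ^ ((s * p - n) * (q / p) + n))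
          * (∫⁻ y, gagliardoDensity n s p u y) ^ (q / p) := by
  obtain ⟨C, hC, hosc⟩ := exists_enorm_setAverage_closedBall_sub_le n hs hp
  have hp0 : 0 < p := by linarith
  have hq0 : 0 < q := by linarith
  have hqp : 1 ≤ q / p := (one_le_div hp0).2 hpq
  have hqp0 : 0 ≤ q / p := by positivity
  set β := (s * p - n) * (q / p) + n with hβdef
  set κ : ℝ≥0∞ := volume (Metric.ball (0 : EuclideanSpace ℝ (Fin n)) 1) with hκ
  have hκt : κ ≠ ⊤ := measure_ball_lt_top.ne
  set θ : ℝ≥0∞ := ENNReal.ofReal (2 ^ (-β / (2 * q))) with hθdef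
  have hθ0 : θ ≠ 0 := by simp only [hθdef, ne_eq, ENNReal.ofReal_eq_zero, not_le]; positivity
  have hθ1 : θ < 1 := by
    rw [hθdef, ENNReal.ofReal_lt_one]
    exact Real.rpow_lt_one_of_one_lt_of_neg (by norm_num)
      (div_neg_of_neg_of_pos (by linarith) (by positivity))
  have hθq : θ ^ (2 * q) = ENNReal.ofReal (2 ^ (-β)) := by
    rw [hθdef, ENNReal.ofReal_rpow_of_nonneg (by positivity) (by positivity),
      ← Real.rpow_mul (by norm_num)]
    congr 2
    field_simp
  have hθq1 : θ ^ q < 1 := ENNReal.rpow_lt_one hθ1 hq0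
  refine ⟨((1 - θ)⁻¹) ^ q * (C ^ (q / p) * κ * (1 - θ ^ q)⁻¹), ?_, ?_⟩
  · refine ENNReal.mul_ne_top (ENNReal.rpow_ne_top_of_nonneg hq0.le ?_)
      (ENNReal.mul_ne_top (ENNReal.mul_ne_top (ENNReal.rpow_ne_top_of_nonneg hqp0 hC) hκt) ?_)
    · exact ENNReal.inv_ne_top.2 (tsub_pos_of_lt hθ1).ne'
    · exact ENNReal.inv_ne_top.2 (tsub_pos_of_lt hθq1).ne'
  intro u hu hloc Ω ctr R hΩ hR hctr
  set h := gagliardoDensity n s p u with hh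
  have hhm : Measurable h := measurable_gagliardoDensity hu
  set D : ℕ → EuclideanSpace ℝ (Fin n) → ℝ≥0∞ := fun k x =>
    (C * ENNReal.ofReal ((R / 2 ^ k) ^ (s * p - n))
      * ∫⁻ y in Metric.closedBall x (R / 2 ^ k), h y) ^ (1 / p) with hD
  have hDm : ∀ k, Measurable (D k) := fun k =>
    ((measurable_setLIntegral_closedBall hhm _).const_mul _).pow_const _
  have hDq : ∀ k, ∫⁻ x, D k x ^ q ≤ C ^ (q / p) * κ * ENNReal.ofReal (R ^ β)
      * (∫⁻ y, h y) ^ (q / p) * (θ ^ (2 * q)) ^ k := by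
    intro k
    have hRk : 0 < R / 2 ^ k := by positivity
    have hscale : ENNReal.ofReal ((R / 2 ^ k) ^ (s * p - n)) ^ (q / p)
        * ENNReal.ofReal ((R / 2 ^ k) ^ n)
        = ENNReal.ofReal (R ^ β) * (θ ^ (2 * q)) ^ k := by
      rw [hθq, ENNReal.ofReal_rpow_of_nonneg (by positivity) hqp0,
        ← ENNReal.ofReal_pow (by positivity), ← ENNReal.ofReal_mul (by positivity),
        ← ENNReal.ofReal_mul (by positivity), ← Real.rpow_mul hRk.le, ← Real.rpow_natCast _ n,
        ← Real.rpow_add hRk, ← hβdef, Real.div_rpow hR.le (by positivity), ← Real.rpow_natCast,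
        ← Real.rpow_natCast, ← Real.rpow_mul (by norm_num), ← Real.rpow_mul (by norm_num),
        div_eq_mul_inv, ← Real.rpow_neg (by norm_num)]
      congr 3
      ring
    have hDk : ∀ x, D k x ^ q = C ^ (q / p) * ENNReal.ofReal ((R / 2 ^ k) ^ (s * p - n)) ^ (q / p)
        * (∫⁻ y in Metric.closedBall x (R / 2 ^ k), h y) ^ (q / p) := by
      intro x
      rw [hD, ← ENNReal.rpow_mul, one_div_mul_eq_div, ENNReal.mul_rpow_of_nonneg _ _ hqp0,
        ENNReal.mul_rpow_of_nonneg _ _ hqp0]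
    simp_rw [hDk]
    rw [lintegral_const_mul _ ((measurable_setLIntegral_closedBall hhm _).pow_const _)]
    calc _ ≤ C ^ (q / p) * ENNReal.ofReal ((R / 2 ^ k) ^ (s * p - n)) ^ (q / p)
          * (κ * ENNReal.ofReal ((R / 2 ^ k) ^ n) * (∫⁻ y, h y) ^ (q / p)) := by
          gcongr
          exact lintegral_setLIntegral_closedBall_rpow_le hhm hqp hRk
      _ = C ^ (q / p) * κ * (∫⁻ y, h y) ^ (q / p)
          * (ENNReal.ofReal ((R / 2 ^ k) ^ (s * p - n)) ^ (q / p)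
          * ENNReal.ofReal ((R / 2 ^ k) ^ n)) := by ring
      _ = _ := by rw [hscale]; ring
  have hpt : ∀ᵐ x, x ∈ Ω →
      ‖u x - ⨍ y in Metric.closedBall (ctr x) (R / 2), u y‖ₑ ^ q ≤ (∑' k, D k x) ^ q := by
    filter_upwards [IsUnifLocDoublingMeasure.ae_tendsto_average volume hloc 1] with x hx hxΩ
    gcongr
    set m : ℕ → ℝ := fun k => Nat.casesOn k (⨍ y in Metric.closedBall (ctr x) (R / 2), u y)
      fun j => ⨍ y in Metric.closedBall x (R / 2 ^ (j + 1)), u y with hm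
    have hlim : Filter.Tendsto m Filter.atTop (nhds (u x)) := by
      rw [← Filter.tendsto_add_atTop_iff_nat 1]
      refine hx (fun _ => x) (fun j : ℕ => R / 2 ^ (j + 1)) ?_ ?_
      · refine tendsto_nhdsWithin_iff.2 ⟨?_, Filter.Eventually.of_forall fun j => ?_⟩
        · have : Filter.Tendsto (fun j : ℕ => R * (1 / 2 : ℝ) ^ (j + 1)) Filter.atTop
              (nhds (R * 0)) :=
            ((tendsto_pow_atTop_nhds_zero_of_lt_one (by norm_num) (by norm_num)).comp
              (Filter.tendsto_add_atTop_nat 1)).const_mul R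
          simpa [div_eq_mul_inv] using this
        · exact mem_Ioi.2 (by positivity)
      · exact Filter.Eventually.of_forall fun j => Metric.mem_closedBall_self (by positivity)
    have hstep : ∀ k, edist (m k) (m k.succ) ≤ D k x := by
      intro k
      have hRk : 0 < R / 2 ^ k := by positivity
      have hhalf : R / 2 ^ (k + 1) = R / 2 ^ k / 2 := by rw [pow_succ]; field_simp
      rw [hD, one_div, ENNReal.le_rpow_inv_iff hp0, edist_eq_enorm_sub]
      have hsub : Metric.closedBall x (R / 2 ^ (k + 1)) ⊆ Metric.closedBall x (R / 2 ^ k) :=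
        Metric.closedBall_subset_closedBall (by linarith)
      cases k with
      | zero =>
        refine hosc u hu hloc x (ctr x) x _ _ _ hRk ?_ hhalf.ge ?_ hsub
        · simp
        · refine Metric.closedBall_subset_closedBall' ?_
          have := hctr x hxΩ
          simp only [pow_zero, div_one]
          linarith
      | succ j =>
        exact hosc u hu hloc x x x _ _ _ hRk (by linarith) hhalf.ge subset_rfl hsub
    have := edist_le_tsum_of_edist_le_of_tendsto₀ (fun k => D k x) hstep hlim
    rwa [edist_comm, edist_eq_enorm_sub] at this
  calc _ ≤ ∫⁻ x in Ω, (∑' k, D k x) ^ q := lintegral_mono_ae ((ae_restrict_iff' hΩ).2 hpt)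
    _ ≤ ∫⁻ x, (∑' k, D k x) ^ q := setLIntegral_le_lintegral _ _
    _ ≤ _ := lintegral_tsum_rpow_le hDm hq0 hθ0 (ne_top_of_lt hθ1) hDq
    _ = _ := by ring

theorem exists_simpleFunc_dist_le {n : ℕ} {Ω : Set (EuclideanSpace ℝ (Fin n))}
    (hΩ : Bornology.IsBounded Ω) {r : ℝ} (hr : 0 < r) :
    ∃ P : SimpleFunc (EuclideanSpace ℝ (Fin n)) (EuclideanSpace ℝ (Fin n)),
      ∀ x ∈ Ω, dist (P x) x ≤ r := by
  set e := TopologicalSpace.denseSeq (EuclideanSpace ℝ (Fin n))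
  obtain ⟨N, hN⟩ := hΩ.isCompact_closure.elim_directed_cover
    (fun N : ℕ => ⋃ k ≤ N, Metric.ball (e k) r)
    (fun N => isOpen_biUnion fun k _ => Metric.isOpen_ball)
    (fun x _ => by
      obtain ⟨k, hk⟩ := (TopologicalSpace.denseRange_denseSeq _).exists_dist_lt x hr
      simp only [mem_iUnion]
      exact ⟨k, k, le_rfl, hk⟩)
    (directed_of_isDirected_le fun i j hij =>
      biUnion_subset_biUnion_left fun k (hk : k ≤ i) => hk.trans hij)
  refine ⟨SimpleFunc.nearestPt e N, fun x hx => ?_⟩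
  have hxN := hN (subset_closure hx)
  simp only [mem_iUnion] at hxN
  obtain ⟨k, hkN, hk⟩ := hxN
  have h := SimpleFunc.edist_nearestPt_le e x hkN
  rw [edist_dist, edist_dist, ENNReal.ofReal_le_ofReal_iff dist_nonneg] at h
  exact h.trans (by rw [dist_comm]; exact (Metric.mem_ball.1 hk).le)

theorem exists_pos_mul_ofReal_rpow_le {K ε : ℝ≥0∞} (hK : K ≠ ⊤) (hε : ε ≠ 0) {β : ℝ}
    (hβ : 0 < β) : ∃ R : ℝ, 0 < R ∧ K * ENNReal.ofReal (R ^ β) ≤ ε := by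
  obtain ⟨d, hd, h⟩ := ENNReal.exists_nnreal_pos_mul_lt hK hε
  refine ⟨(d : ℝ) ^ (1 / β), by positivity, ?_⟩
  rw [← Real.rpow_mul d.coe_nonneg, one_div_mul_cancel hβ.ne', Real.rpow_one, ENNReal.ofReal_coe_nnreal,
    mul_comm]
  exact h.le

/-- A family bounded in `W^{s,p}(ℝ^n)` is totally bounded in `L^q` of a bounded set, for
`p ≤ q < p*`. -/
theorem exists_finite_net_of_gagliardo_bounded {n : ℕ} {s p q : ℝ} (hs : 0 < s)
    (hp : 1 ≤ p) (hpq : p ≤ q) (hβ : 0 < (s * p - n) * (q / p) + n)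
    {Ω : Set (EuclideanSpace ℝ (Fin n))} (hΩm : MeasurableSet Ω) (hΩb : Bornology.IsBounded Ω)
    {S : ℝ≥0∞} (hS : S ≠ ⊤) {ε : ℝ≥0∞} (hε : ε ≠ 0) :
    ∃ G : Set (EuclideanSpace ℝ (Fin n) → ℝ), G.Finite ∧ (∀ g ∈ G, Measurable g) ∧
      ∀ u : EuclideanSpace ℝ (Fin n) → ℝ, Measurable u → ∫⁻ x, ‖u x‖ₑ ^ p ≤ S →
        ∫⁻ y, gagliardoDensity n s p u y ≤ S →
        ∃ g ∈ G, ∫⁻ x in Ω, ‖u x - g x‖ₑ ^ q ≤ ε := by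
  obtain ⟨C, hC, happrox⟩ := exists_lintegral_enorm_sub_setAverage_rpow_le n hs hp hpq hβ
  have hp0 : 0 < p := by linarith
  have hq0 : 0 < q := by linarith
  have hqp0 : 0 ≤ q / p := by positivity
  have h2 : (2 : ℝ≥0∞) ^ (q - 1) ≠ ⊤ :=
    ENNReal.rpow_ne_top_of_nonneg (by linarith) ENNReal.ofNat_ne_top
  have hε2 : ε / 2 ≠ 0 := by simp [hε]
  obtain ⟨R, hR, hRε⟩ := exists_pos_mul_ofReal_rpow_le (K := 2 ^ (q - 1) * (C * S ^ (q / p)))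
    (ENNReal.mul_ne_top h2 (ENNReal.mul_ne_top hC (ENNReal.rpow_ne_top_of_nonneg hqp0 hS)))
    hε2 hβ
  obtain ⟨η, hη, hηε⟩ := exists_pos_mul_ofReal_rpow_le (K := 2 ^ (q - 1) * volume Ω)
    (ENNReal.mul_ne_top h2 hΩb.measure_lt_top.ne) hε2 hq0
  obtain ⟨P, hP⟩ := exists_simpleFunc_dist_le hΩb (half_pos hR)
  set T : ℝ≥0∞ := ((volume (Metric.closedBall (0 : EuclideanSpace ℝ (Fin n)) (R / 2)))⁻¹ * S)
    ^ (1 / p) with hT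
  have hTt : T ≠ ⊤ := by
    refine ENNReal.rpow_ne_top_of_nonneg (by positivity) (ENNReal.mul_ne_top ?_ hS)
    simpa using (Metric.measure_closedBall_pos volume _ (half_pos hR)).ne'
  obtain ⟨t, -, htfin, ht⟩ := Metric.finite_approx_of_totallyBounded
    (isCompact_Icc (a := fun _ : P.range => -T.toReal) (b := fun _ => T.toReal)).totallyBounded
    η hη
  classical
  set F : (P.range → ℝ) → EuclideanSpace ℝ (Fin n) → ℝ := fun w =>
    P.map fun y => if h : y ∈ P.range then w ⟨y, h⟩ else 0 with hF
  refine ⟨Set.image F t, htfin.image F, ?_, ?_⟩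
  · rintro _ ⟨w, -, rfl⟩
    exact SimpleFunc.measurable _
  intro u hu hup hug
  set avg : EuclideanSpace ℝ (Fin n) → ℝ := fun c => ⨍ y in Metric.closedBall c (R / 2), u y
    with havg
  have havgT : ∀ c, |avg c| ≤ T.toReal := by
    intro c
    rw [← ENNReal.ofReal_le_iff_le_toReal hTt, ← Real.enorm_eq_ofReal_abs, hT, one_div,
      ENNReal.le_rpow_inv_iff hp0]
    refine (enorm_setAverage_rpow_le (Metric.measure_closedBall_pos volume c (half_pos hR)).ne'
      measure_closedBall_lt_top.ne hu hp).trans ?_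
    rw [Measure.addHaar_closedBall_center]
    gcongr
    exact (setLIntegral_le_lintegral _ _).trans hup
  have hloc : LocallyIntegrable u := by
    have hmem : MemLp u (ENNReal.ofReal p) := by
      refine ⟨hu.aestronglyMeasurable, ?_⟩
      rw [eLpNorm_lt_top_iff_lintegral_rpow_enorm_lt_top (by simpa using hp0)
        ENNReal.ofReal_ne_top, ENNReal.toReal_ofReal hp0.le]
      exact hup.trans_lt hS.lt_top
    exact hmem.locallyIntegrable (by simpa using hp)
  have hmemIcc : (fun c : P.range => avg c) ∈
      Icc (fun _ : P.range => -T.toReal) fun _ => T.toReal :=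
    ⟨fun c => (abs_le.1 (havgT c)).1, fun c => (abs_le.1 (havgT c)).2⟩
  have hcover := ht hmemIcc
  simp only [mem_iUnion] at hcover
  obtain ⟨w, hwt, hw⟩ := hcover
  refine ⟨F w, mem_image_of_mem F hwt, ?_⟩
  have hclose : ∀ x, ‖avg (P x) - F w x‖ₑ ≤ ENNReal.ofReal η := by
    intro x
    have hx : P x ∈ P.range := P.mem_range_self x
    have hFx : F w x = w ⟨P x, hx⟩ := by simp [hF]
    rw [hFx, Real.enorm_eq_ofReal_abs, ← Real.dist_eq]
    exact ENNReal.ofReal_le_ofReal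
      ((dist_le_pi_dist (fun c : P.range => avg c) w ⟨P x, hx⟩).trans (Metric.mem_ball.1 hw).le)
  calc _ ≤ ∫⁻ x in Ω, 2 ^ (q - 1) * (‖u x - avg (P x)‖ₑ ^ q + ENNReal.ofReal (η ^ q)) := by
        refine lintegral_mono fun x => ?_
        calc ‖u x - F w x‖ₑ ^ q ≤ (‖u x - avg (P x)‖ₑ + ‖avg (P x) - F w x‖ₑ) ^ q := by
              gcongr
              rw [← sub_add_sub_cancel (u x) (avg (P x)) (F w x)]
              exact enorm_add_le _ _
          _ ≤ 2 ^ (q - 1) * (‖u x - avg (P x)‖ₑ ^ q + ‖avg (P x) - F w x‖ₑ ^ q) :=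
              ENNReal.rpow_add_le_mul_rpow_add_rpow _ _ (hp.trans hpq)
          _ ≤ _ := by
              rw [← ENNReal.ofReal_rpow_of_nonneg hη.le hq0.le]
              gcongr
              exact hclose x
    _ = 2 ^ (q - 1) * (∫⁻ x in Ω, ‖u x - avg (P x)‖ₑ ^ q)
        + 2 ^ (q - 1) * volume Ω * ENNReal.ofReal (η ^ q) := by
        rw [lintegral_const_mul' _ _ h2, lintegral_add_right _ measurable_const,
          setLIntegral_const]
        ring
    _ ≤ 2 ^ (q - 1) * (C * ENNReal.ofReal (R ^ ((s * p - n) * (q / p) + n)) * S ^ (q / p))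
        + ε / 2 := by
        gcongr
        exact (happrox u hu hloc Ω P R hΩm hR hP).trans (by gcongr)
    _ = 2 ^ (q - 1) * (C * S ^ (q / p)) * ENNReal.ofReal (R ^ ((s * p - n) * (q / p) + n))
        + ε / 2 := by ring
    _ ≤ ε / 2 + ε / 2 := by gcongr
    _ = ε := ENNReal.add_halves ε

/-- fractional compactness theorem. If `sp < n`, `q < p* = np/(n−sp)`, `Ω` is a
bounded extension domain for `W^{s,p}`, and `𝓘 ⊆ L^p(Ω)` is bounded with uniformly bounded
Gagliardo seminorms, then `𝓘` is totally bounded in `L^q(Ω)`. -/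
theorem fractional_compact_embedding {n : ℕ} (s p : ℝ)
    (hs : s ∈ Set.Ioo (0 : ℝ) 1) (hp : 1 ≤ p) (hspn : s * p < n)
    (q : ℝ) (hq : 1 ≤ q) (hq' : q < n * p / (n - s * p))
    (Ω : Set (EuclideanSpace ℝ (Fin n))) (hΩo : IsOpen Ω) (hΩb : Bornology.IsBounded Ω)
    (hΩext : IsExtensionDomain n s p Ω)
    (I : Set (EuclideanSpace ℝ (Fin n) → ℝ)) (hImeas : ∀ f ∈ I, Measurable f)
    (hIbdd : ∃ M : ℝ, ∀ f ∈ I, (∫⁻ x in Ω, ENNReal.ofReal (|f x| ^ p)) ≤ ENNReal.ofReal M)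
    (hIgag : ∃ M' : ℝ, ∀ f ∈ I,
      (∫⁻ x in Ω, ∫⁻ y in Ω, ENNReal.ofReal (|f x - f y| ^ p / dist x y ^ ((n : ℝ) + s * p)))
        ≤ ENNReal.ofReal M') :
    ∀ δ : ℝ, 0 < δ → ∃ G : Set (EuclideanSpace ℝ (Fin n) → ℝ), G.Finite ∧
      ∀ f ∈ I, ∃ g ∈ G,
        (∫⁻ x in Ω, ENNReal.ofReal (|f x - g x| ^ q)) ^ (1 / q) < ENNReal.ofReal δ := by
  intro δ hδ
  have hp0 : 0 < p := by linarith
  have hq0 : 0 < q := by linarith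
  have hnsp : 0 < (n : ℝ) - s * p := by linarith
  set r := max p q with hr
  have hpr : p ≤ r := le_max_left _ _
  have hr0 : 0 < r := by linarith
  have hr' : r < n * p / (n - s * p) := by
    refine max_lt ?_ hq'
    rw [lt_div_iff₀ hnsp]
    nlinarith [mul_pos hs.1 hp0]
  have hβ : 0 < (s * p - n) * (r / p) + n := by
    rw [lt_div_iff₀ hnsp] at hr'
    have : (s * p - n) * (r / p) + n = (n * p - r * (n - s * p)) / p := by
      field_simp
      ring
    rw [this]
    exact div_pos (by linarith) hp0
  obtain ⟨C, hC, hext⟩ := hΩext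
  obtain ⟨M, hM⟩ := hIbdd
  obtain ⟨M', hM'⟩ := hIgag
  set S : ℝ≥0∞ := ENNReal.ofReal C ^ p * (ENNReal.ofReal M + ENNReal.ofReal M') with hS
  have hSt : S ≠ ⊤ := ENNReal.mul_ne_top
    (ENNReal.rpow_ne_top_of_nonneg hp0.le ENNReal.ofReal_ne_top) (by simp)
  have hexp : 0 ≤ 1 / q - 1 / r := by
    rw [sub_nonneg]
    exact one_div_le_one_div_of_le hq0 (le_max_right _ _)
  obtain ⟨d, hd, hdδ⟩ := ENNReal.exists_nnreal_pos_mul_lt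
    (ENNReal.rpow_ne_top_of_nonneg hexp (hΩb.measure_lt_top (μ := volume)).ne)
    (ENNReal.ofReal_pos.2 hδ).ne'
  obtain ⟨G, hGfin, hGm, hG⟩ := exists_finite_net_of_gagliardo_bounded hs.1 hp hpr hβ
    hΩo.measurableSet hΩb hSt (ε := (d : ℝ≥0∞) ^ r) (by
      simp [ENNReal.rpow_eq_zero_iff, hd.ne'])
  refine ⟨G, hGfin, fun f hf => ?_⟩
  have hnorm : fracNormPow n s p Ω f ≤ ENNReal.ofReal M + ENNReal.ofReal M' :=
    add_le_add (hM f hf) (hM' f hf)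
  obtain ⟨u, hu, huf, hule⟩ := hext f (hImeas f hf)
    (hnorm.trans_lt (ENNReal.add_lt_top.2 ⟨ENNReal.ofReal_lt_top, ENNReal.ofReal_lt_top⟩))
  have huS : fracNormPow n s p univ u ≤ S := by
    have h := ENNReal.rpow_le_rpow hule hp0.le
    rw [ENNReal.mul_rpow_of_nonneg _ _ hp0.le, ← ENNReal.rpow_mul, ← ENNReal.rpow_mul,
      one_div_mul_cancel hp0.ne', ENNReal.rpow_one, ENNReal.rpow_one] at h
    exact h.trans (by rw [hS]; gcongr)
  simp only [fracNormPow, Measure.restrict_univ] at huS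
  obtain ⟨g, hgG, hg⟩ := hG u hu
    (by
      simp only [← ofReal_abs_rpow _ hp0.le]
      exact le_self_add.trans huS)
    (le_add_self.trans huS)
  refine ⟨g, hgG, ?_⟩
  have hfu : ∫⁻ x in Ω, ENNReal.ofReal (|f x - g x| ^ q) = ∫⁻ x in Ω, ‖(u - g) x‖ₑ ^ q :=
    setLIntegral_congr_fun hΩo.measurableSet fun x hx => by
      simp only [ofReal_abs_rpow _ hq0.le, Pi.sub_apply, huf x hx]
  rw [hfu]
  have hcomp := eLpNorm'_le_eLpNorm'_mul_rpow_measure_univ (μ := volume.restrict Ω) hq0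
    (le_max_right p q) (hu.sub (hGm g hgG)).aestronglyMeasurable
  simp only [eLpNorm', Measure.restrict_apply_univ] at hcomp
  refine hcomp.trans_lt (lt_of_le_of_lt ?_ hdδ)
  gcongr
  rw [one_div, ENNReal.rpow_inv_le_iff hr0]
  exact hg
end
end

section
/- Let H be a real Hilbert space and f : H → ℝ an even C² functional satisfying the Palais–Smale condition (every sequence (u_j) in H with (f(u_j))_j bounded and f'(u_j) → 0 in the dual norm is relatively compact in H). For c ∈ ℝ set f^c = { u ∈ H : f(u) ≤ c }. Then for all c₁ ≤ c₂ < f(0): gen(f^{c₂}) ≤ gen(f^{c₁}) + #{ {−u, u} : u ∈ H, f'(u) = 0, c₁ ≤ f(u) ≤ c₂ }, where # denotes the number of such (unordered) pairs of critical points (the inequality being trivial if this number is infinite). -/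
open MeasureTheory Real Set
open scoped ENNReal

noncomputable section

/-- The Krasnoselskii genus of a subset `E` of a real normed space `H`: the least `m ∈ ℕ`
(as an element of `ℕ∞`, with value `⊤` if none exists) such that there is a continuous odd
map `φ : H → ℝ^m` with `φ(u) ≠ 0` for every `u ∈ E`. -/
def genus {H : Type*} [NormedAddCommGroup H] (E : Set H) : ℕ∞ :=
  sInf {m : ℕ∞ | ∃ k : ℕ, m = (k : ℕ∞) ∧
    ∃ φ : H → EuclideanSpace ℝ (Fin k), Continuous φ ∧ (∀ u, φ (-u) = -(φ u)) ∧
      ∀ u ∈ E, φ u ≠ 0}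

open Filter Topology Gradient

section Genus

variable {H : Type*} [NormedAddCommGroup H]

theorem genus_le_of_odd_map {E : Set H} {k : ℕ} (φ : H → EuclideanSpace ℝ (Fin k))
    (hc : Continuous φ) (hodd : ∀ u, φ (-u) = -φ u) (hE : ∀ u ∈ E, φ u ≠ 0) : genus E ≤ k :=
  sInf_le ⟨k, rfl, φ, hc, hodd, hE⟩

theorem exists_odd_map_of_genus_ne_top {E : Set H} (h : genus E ≠ ⊤) :
    ∃ k : ℕ, genus E = k ∧ ∃ φ : H → EuclideanSpace ℝ (Fin k), Continuous φ ∧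
      (∀ u, φ (-u) = -φ u) ∧ ∀ u ∈ E, φ u ≠ 0 := by
  refine csInf_mem (s := {m : ℕ∞ | ∃ k : ℕ, m = (k : ℕ∞) ∧
    ∃ φ : H → EuclideanSpace ℝ (Fin k), Continuous φ ∧ (∀ u, φ (-u) = -(φ u)) ∧
      ∀ u ∈ E, φ u ≠ 0}) ?_
  by_contra hne
  rw [Set.not_nonempty_iff_eq_empty] at hne
  exact h (by rw [genus, hne, _root_.sInf_empty])

/-- The genus does not decrease under odd continuous maps. -/
theorem genus_le_genus_of_mapsTo {A B : Set H} (η : H → H) (hη : Continuous η)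
    (hodd : ∀ u, η (-u) = -η u) (hAB : ∀ u ∈ A, η u ∈ B) : genus A ≤ genus B := by
  by_cases hB : genus B = ⊤
  · simp [hB]
  obtain ⟨k, hk, φ, hφ, hφodd, hφB⟩ := exists_odd_map_of_genus_ne_top hB
  rw [hk]
  exact genus_le_of_odd_map (φ ∘ η) (hφ.comp hη) (fun u => by simp [hodd, hφodd])
    fun u hu => hφB _ (hAB u hu)

theorem genus_mono {A B : Set H} (h : A ⊆ B) : genus A ≤ genus B :=
  genus_le_genus_of_mapsTo id continuous_id (fun _ => rfl) fun _ hu => h hu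

/-- Removing the set where an odd real function does not vanish lowers the genus by at most
one. -/
theorem genus_le_genus_add_one {A B : Set H} (η : H → H) (hη : Continuous η)
    (hodd : ∀ u, η (-u) = -η u) (g : H → ℝ) (hg : Continuous g) (hgodd : ∀ u, g (-u) = -g u)
    (hAB : ∀ u ∈ A, g u = 0 → η u ∈ B) : genus A ≤ genus B + 1 := by
  by_cases hB : genus B = ⊤
  · simp [hB]
  obtain ⟨k, hk, φ, hφ, hφodd, hφB⟩ := exists_odd_map_of_genus_ne_top hB
  rw [hk]
  refine genus_le_of_odd_map (k := k + 1)
    (fun u => WithLp.toLp 2 (Fin.cons (g u) (fun i => φ (η u) i))) ?_ ?_ ?_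
  · refine (PiLp.continuous_toLp 2 _).comp (continuous_pi fun i => ?_)
    refine Fin.cases ?_ (fun j => ?_) i
    · simpa using hg
    · simpa [Function.comp_def] using (EuclideanSpace.proj (𝕜 := ℝ) j).continuous.comp (hφ.comp hη)
  · intro u
    ext i
    refine Fin.cases ?_ (fun j => ?_) i <;> simp [hgodd, hodd, hφodd]
  · intro u hu h0
    have h0' : ∀ i, (Fin.cons (g u) (fun i => φ (η u) i) : Fin (k + 1) → ℝ) i = 0 :=
      fun i => congrFun (congrArg WithLp.ofLp h0) i
    refine hφB _ (hAB u hu (h0' 0)) ?_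
    ext j
    simpa using h0' j.succ

end Genus

section Descent

variable {H : Type*} [NormedAddCommGroup H]

/-- If the iterates of an odd continuous map `u ↦ u - w u` eventually bring every point of a
closed set `E` below the level `a`, and `f` does not increase along the segments from `u` to
`u - w u`, then an odd continuous map brings all of `E` below the level `a`. -/
theorem exists_odd_map_of_forall_exists_iterate [NormedSpace ℝ H] {f : H → ℝ}
    (hf : Continuous f) (w : H → H) (hw : Continuous w) (hwodd : ∀ u, w (-u) = -w u)
    (hdesc : ∀ u, ∀ τ ∈ Icc (0 : ℝ) 1, f (u - τ • w u) ≤ f u) {E : Set H} (hE : IsClosed E)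
    {a : ℝ} (hEa : ∀ u ∈ E, ∃ n : ℕ, f ((fun v => v - w v)^[n] u) < a) :
    ∃ η : H → H, Continuous η ∧ (∀ u, η (-u) = -η u) ∧ ∀ u ∈ E, f (η u) ≤ a := by
  set T : H → H := fun v => v - w v
  have hTc : Continuous T := continuous_id.sub hw
  obtain ⟨N₀, hN₀⟩ := exists_continuous_forall_mem_convex_of_local_const
    (t := fun u => {r : ℝ | 0 ≤ r ∧ (u ∈ E → ∃ n : ℕ, (n : ℝ) ≤ r ∧ f (T^[n] u) < a)})
    (fun u => by
      refine OrdConnected.convex ⟨?_⟩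
      rintro r ⟨hr, hr'⟩ r₁ - r₂ ⟨h1, -⟩
      exact ⟨hr.trans h1, fun hu => (hr' hu).imp fun n hn => ⟨hn.1.trans h1, hn.2⟩⟩)
    (fun u => by
      by_cases hu : u ∈ E
      · obtain ⟨n, hn⟩ := hEa u hu
        refine ⟨n, ?_⟩
        have := (hf.comp (hTc.iterate n)).continuousAt.eventually_lt_const hn
        filter_upwards [this] with v hv
        exact ⟨n.cast_nonneg, fun _ => ⟨n, le_rfl, hv⟩⟩
      · refine ⟨0, ?_⟩
        filter_upwards [hE.isOpen_compl.mem_nhds hu] with v hv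
        exact ⟨le_rfl, fun h => absurd h hv⟩)
  let N : H → ℝ := fun u => N₀ u + N₀ (-u)
  have hNc : Continuous N := N₀.continuous.add (N₀.continuous.comp continuous_neg)
  have hNeven : ∀ u, N (-u) = N u := fun u => by simp [N, add_comm]
  let τ : ℕ → H → ℝ := fun k u => max 0 (min 1 (N u - k))
  have hτ : ∀ k u, τ k u ∈ Icc (0 : ℝ) 1 := fun k u =>
    ⟨le_max_left _ _, max_le zero_le_one (min_le_left _ _)⟩
  let F : ℕ → H → H := fun n => Nat.rec (fun u => u) (fun k G u => G u - τ k u • w (G u)) n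
  have hFs : ∀ k u, F (k + 1) u = F k u - τ k u • w (F k u) := fun k u => rfl
  have hFc : ∀ k, Continuous (F k) := by
    intro k
    induction k with
    | zero => exact continuous_id
    | succ k ih =>
      have hτc : Continuous (τ k) := by fun_prop
      exact ih.sub (hτc.smul (hw.comp ih))
  have hFodd : ∀ k u, F k (-u) = -F k u := by
    intro k u
    induction k with
    | zero => rfl
    | succ k ih =>
      rw [hFs, hFs, ih, hwodd, show τ k (-u) = τ k u by simp [τ, hNeven]]
      simp only [smul_neg]
      abel
  have hFstat : ∀ u (k : ℕ), N u ≤ k → ∀ n, k ≤ n → F n u = F k u := by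
    intro u k hk n hn
    induction n, hn using Nat.le_induction with
    | base => rfl
    | succ n hn ih =>
      have : (k : ℝ) ≤ n := by exact_mod_cast hn
      have h0 : τ n u = 0 := max_eq_left ((min_le_right _ _).trans (by linarith))
      rw [hFs, h0, zero_smul, sub_zero, ih]
  have hFiter : ∀ u (k : ℕ), (k : ℝ) ≤ N u → F k u = T^[k] u := by
    intro u k hk
    induction k with
    | zero => rfl
    | succ k ih =>
      push_cast at hk
      have h1 : τ k u = 1 := by
        simp only [τ]
        rw [min_eq_left (by linarith), max_eq_right zero_le_one]
      rw [hFs, h1, one_smul, ih (by linarith), Function.iterate_succ_apply']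
  have hFanti : ∀ u k n, k ≤ n → f (F n u) ≤ f (F k u) := fun u k n hkn =>
    antitone_nat_of_succ_le (f := fun k => f (F k u)) (fun k => hdesc _ _ (hτ k u)) hkn
  refine ⟨fun u => F ⌈N u⌉₊ u, ?_, fun u => by simp [hNeven, hFodd], ?_⟩
  · refine continuous_iff_continuousAt.2 fun u => ?_
    obtain ⟨n, hn⟩ := exists_nat_gt (N u)
    refine ((hFc n).continuousAt).congr ?_
    filter_upwards [hNc.continuousAt.eventually_lt_const hn] with v hv
    exact hFstat v _ (Nat.le_ceil _) n (Nat.ceil_le.2 hv.le)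
  · intro u hu
    obtain ⟨n, hn, hna⟩ := (hN₀ u).2 hu
    have hnN : (n : ℝ) ≤ N u := hn.trans (le_add_of_nonneg_right (hN₀ (-u)).1)
    refine (hFanti u n _ ?_).trans ?_
    · exact_mod_cast hnN.trans (Nat.le_ceil _)
    · rw [hFiter u n hnN]
      exact hna.le

/-- A descent scheme starting at `u` leaves the strip `|f - c| ≤ ε` through its bottom, as long as
the slope bound `d` is at least `δ` on the part of the strip within distance `δ` of `u`. -/
theorem exists_iterate_lt_of_le_slope [CompleteSpace H] {f : H → ℝ}
    {w : H → H} (hw : Continuous w) {d : H → ℝ} (hd : Continuous d)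
    (hwd : ∀ u, w u = 0 → d u = 0) (hdesc : ∀ u, f (u - w u) ≤ f u - ‖w u‖ * d u / 2)
    {c δ ε : ℝ} (hδ : 0 < δ) (hε : 4 * ε ≤ δ ^ 2) {u : H} (hu : f u ≤ c + ε)
    (hslope : ∀ z, dist z u ≤ δ → |f z - c| ≤ ε → δ ≤ d z) :
    ∃ n : ℕ, f ((fun v => v - w v)^[n] u) < c - ε := by
  by_contra! hcon
  set x : ℕ → H := fun n => (fun v => v - w v)^[n] u
  have hx0 : x 0 = u := rfl
  have hxs : ∀ n, x (n + 1) = x n - w (x n) := fun n => Function.iterate_succ_apply' _ _ _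
  have hstep : ∀ n, δ ≤ d (x n) → δ * dist (x n) (x (n + 1)) ≤ 2 * (f (x n) - f (x (n + 1))) := by
    intro n hn
    have h1 := hdesc (x n)
    rw [hxs, dist_eq_norm, sub_sub_cancel]
    nlinarith [norm_nonneg (w (x n))]
  have key : ∀ n, δ * dist (x n) u ≤ 2 * (f u - f (x n)) ∧ δ ≤ d (x n) := by
    have hd_of : ∀ n, δ * dist (x n) u ≤ 2 * (f u - f (x n)) → f (x n) ≤ c + ε →
        δ ≤ d (x n) := by
      intro n hn hle
      have hge := hcon n
      refine hslope _ ?_ (abs_le.2 ⟨by linarith, by linarith⟩)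
      refine le_of_mul_le_mul_left ?_ hδ
      nlinarith
    intro n
    induction n with
    | zero =>
      have h0 : δ * dist (x 0) u ≤ 2 * (f u - f (x 0)) := by simp [hx0]
      exact ⟨h0, hd_of 0 h0 hu⟩
    | succ n ih =>
      have h1 := hstep n ih.2
      have htri : dist (x (n + 1)) u ≤ dist (x n) (x (n + 1)) + dist (x n) u :=
        dist_triangle_left _ _ _
      have h2 : δ * dist (x (n + 1)) u ≤ 2 * (f u - f (x (n + 1))) := by
        nlinarith [ih.1]
      refine ⟨h2, hd_of _ h2 ?_⟩
      have : 0 ≤ δ * dist (x (n + 1)) u := by positivity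
      linarith
  have hsum : Summable fun n => dist (x n) (x (n + 1)) := by
    refine summable_of_sum_range_le (c := 2 * (f u - (c - ε)) / δ) (fun _ => dist_nonneg)
      fun n => ?_
    rw [le_div_iff₀' hδ, Finset.mul_sum]
    calc ∑ i ∈ Finset.range n, δ * dist (x i) (x (i + 1))
        ≤ ∑ i ∈ Finset.range n, 2 * (f (x i) - f (x (i + 1))) :=
          Finset.sum_le_sum fun i _ => hstep i (key i).2
      _ = 2 * (f u - f (x n)) := by
          rw [← Finset.mul_sum, Finset.sum_range_sub' (fun i => f (x i)), hx0]
      _ ≤ 2 * (f u - (c - ε)) := by linarith [hcon n]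
  obtain ⟨y, hy⟩ := cauchySeq_tendsto_of_complete (cauchySeq_of_summable_dist hsum)
  have hy' : Tendsto (fun n => x (n + 1)) atTop (𝓝 (y - w y)) := by
    simp only [hxs]
    exact hy.sub ((hw.tendsto y).comp hy)
  have hfix := tendsto_nhds_unique (hy.comp (tendsto_add_atTop_nat 1)) hy'
  have hdy : δ ≤ d y :=
    ge_of_tendsto' ((hd.tendsto y).comp hy) fun n => (key n).2
  have : d y = 0 := hwd y (sub_eq_self.1 hfix.symm)
  linarith

end Descent

section Gradient

variable {H : Type*} [NormedAddCommGroup H] [InnerProductSpace ℝ H] [CompleteSpace H]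

theorem norm_gradient (f : H → ℝ) (u : H) : ‖∇ f u‖ = ‖fderiv ℝ f u‖ := by
  rw [← toDual_gradient, LinearIsometryEquiv.norm_map]

theorem gradient_neg_of_even {f : H → ℝ} (heven : ∀ u, f (-u) = f u) (u : H) :
    ∇ f (-u) = -∇ f u := by
  have h : fderiv ℝ f (-u) = -fderiv ℝ f u := by
    have := fderiv_comp_smul (𝕜 := ℝ) (f := f) (x := u) (-1)
    simp only [neg_smul, one_smul, heven] at this
    rw [this, neg_neg]
  simp [gradient, h]

theorem ContDiff.gradient {f : H → ℝ} (hf : ContDiff ℝ 2 f) : ContDiff ℝ 1 (∇ f) :=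
  (InnerProductSpace.toDual ℝ H).symm.contDiff.comp
    (hf.fderiv_right (m := 1) (by norm_num))

/-- Near every point, gradient steps up to a uniform positive length decrease a `C²` function at
half the linear rate. -/
theorem exists_pos_eventually_gradient_step {f : H → ℝ} (hf : ContDiff ℝ 2 f) (x₀ : H) :
    ∃ s : ℝ, 0 < s ∧ ∀ᶠ x in 𝓝 x₀, ∀ σ ∈ Icc 0 s,
      f (x - σ • ∇ f x) ≤ f x - σ * ‖∇ f x‖ ^ 2 / 2 := by
  obtain ⟨K, t, ht, hK⟩ :=
    ((hf.fderiv_right (m := 1) (by norm_num)).contDiffAt (x := x₀)).exists_lipschitzOnWith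
  obtain ⟨r, hr, hrt⟩ := Metric.mem_nhds_iff.1 ht
  have hcont : Continuous fun p : ℝ × H => p.2 - p.1 • ∇ f p.2 := by
    have := hf.gradient.continuous
    fun_prop
  have hnear : ∀ᶠ p : ℝ × H in 𝓝 (0, x₀), p.2 - p.1 • ∇ f p.2 ∈ Metric.ball x₀ r :=
    hcont.continuousAt.eventually_mem (by simpa using Metric.ball_mem_nhds x₀ hr)
  rw [nhds_prod_eq] at hnear
  obtain ⟨P, hP, Q, hQ, hPQ⟩ := eventually_prod_iff.1 hnear
  obtain ⟨s₁, hs₁, hPs⟩ := Metric.eventually_nhds_iff.1 hP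
  refine ⟨min (s₁ / 2) (1 / (2 * (K + 1))), by positivity, ?_⟩
  filter_upwards [hQ, Metric.ball_mem_nhds x₀ hr] with x hxQ hxr σ ⟨hσ0, hσ⟩
  have hσ₁ : σ ≤ s₁ / 2 := hσ.trans (min_le_left _ _)
  have hσK : σ * (2 * (K + 1)) ≤ 1 := by
    rw [← le_div_iff₀ (by positivity)]
    exact hσ.trans (min_le_right _ _)
  have hy : x - σ • ∇ f x ∈ Metric.ball x₀ r :=
    hPQ (hPs (by rw [dist_zero_right, Real.norm_eq_abs, abs_of_nonneg hσ0]; linarith)) hxQ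
  set y := x - σ • ∇ f x with hydef
  have hyx : y - x = -(σ • ∇ f x) := by rw [hydef]; abel
  have hnyx : ‖y - x‖ = σ * ‖∇ f x‖ := by
    rw [hyx, norm_neg, norm_smul, Real.norm_eq_abs, abs_of_nonneg hσ0]
  have hseg : segment ℝ x y ⊆ Metric.ball x₀ r := (convex_ball x₀ r).segment_subset hxr hy
  have hmv := Convex.norm_image_sub_le_of_norm_fderiv_le' (𝕜 := ℝ) (f := f) (s := segment ℝ x y)
    (φ := fderiv ℝ f x) (C := K * ‖y - x‖)
    (fun z _ => hf.differentiable (by norm_num) z)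
    (fun z hz => by
      refine (hK.norm_sub_le (hrt (hseg hz)) (hrt hxr)).trans ?_
      gcongr
      exact norm_sub_le_of_mem_segment hz)
    (convex_segment x y) (left_mem_segment ℝ x y) (right_mem_segment ℝ x y)
  have hlin : fderiv ℝ f x (y - x) = -(σ * ‖∇ f x‖ ^ 2) := by
    rw [← inner_gradient_left, hyx, inner_neg_right, inner_smul_right,
      real_inner_self_eq_norm_sq]
  rw [hlin, hnyx, Real.norm_eq_abs] at hmv
  have h1 := (abs_le.1 hmv).2
  have h2 : (K : ℝ) * σ * (σ * ‖∇ f x‖ ^ 2) ≤ 1 / 2 * (σ * ‖∇ f x‖ ^ 2) := by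
    gcongr
    nlinarith
  nlinarith

/-- A continuous odd field of descent steps for an even `C²` function. -/
theorem exists_odd_descent_field {f : H → ℝ} (hf : ContDiff ℝ 2 f)
    (heven : ∀ u, f (-u) = f u) :
    ∃ w : H → H, Continuous w ∧ (∀ u, w (-u) = -w u) ∧
      (∀ u, w u = 0 → ‖fderiv ℝ f u‖ = 0) ∧
      ∀ u, ∀ τ ∈ Icc (0 : ℝ) 1,
        f (u - τ • w u) ≤ f u - τ * (‖w u‖ * ‖fderiv ℝ f u‖ / 2) := by
  obtain ⟨s, hs⟩ := exists_continuous_forall_mem_convex_of_local_const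
    (t := fun u => {s : ℝ | 0 < s ∧ ∀ σ ∈ Icc 0 s,
      f (u - σ • ∇ f u) ≤ f u - σ * ‖∇ f u‖ ^ 2 / 2})
    (fun u => by
      refine OrdConnected.convex ⟨?_⟩
      rintro r ⟨hr, -⟩ r₁ ⟨-, hr₁⟩ r₂ ⟨h1, h2⟩
      exact ⟨hr.trans_le h1, fun σ hσ => hr₁ σ ⟨hσ.1, hσ.2.trans h2⟩⟩)
    (fun u => by
      obtain ⟨s, hs, h⟩ := exists_pos_eventually_gradient_step hf u
      exact ⟨s, h.mono fun v hv => ⟨hs, hv⟩⟩)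
  let m : H → ℝ := fun u => min (s u) (s (-u))
  have hm : ∀ u, 0 < m u := fun u => lt_min (hs u).1 (hs (-u)).1
  have hmc : Continuous m := s.continuous.min (s.continuous.comp continuous_neg)
  refine ⟨fun u => m u • ∇ f u, hmc.smul hf.gradient.continuous, fun u => ?_, fun u hu => ?_,
    fun u τ hτ => ?_⟩
  · simp [m, gradient_neg_of_even heven, min_comm]
  · rw [← norm_gradient, norm_eq_zero]
    exact (smul_eq_zero.1 hu).resolve_left (hm u).ne'
  · have := (hs u).2 (τ * m u) ⟨mul_nonneg hτ.1 (hm u).le,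
      (mul_le_of_le_one_left (hm u).le hτ.2).trans (min_le_left _ _)⟩
    rw [smul_smul, ← norm_gradient, norm_smul, Real.norm_eq_abs, abs_of_pos (hm u)]
    linarith

end Gradient

section PalaisSmale

variable {H : Type*} [NormedAddCommGroup H]

/-- The Palais–Smale condition: a sequence along which `f` is bounded and `f'` tends to zero has
a convergent subsequence. -/
def PalaisSmale [NormedSpace ℝ H] (f : H → ℝ) : Prop :=
  ∀ u : ℕ → H, (∃ M : ℝ, ∀ j, |f (u j)| ≤ M) →
    Tendsto (fun j => ‖fderiv ℝ f (u j)‖) atTop (𝓝 0) →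
    ∃ (φ : ℕ → ℕ) (x : H), StrictMono φ ∧ Tendsto (fun i => u (φ i)) atTop (𝓝 x)

/-- Near a closed set free of critical points at level `c`, the derivative is bounded away from
zero near that level. -/
theorem PalaisSmale.exists_le_norm_fderiv [NormedSpace ℝ H] {f : H → ℝ} (hPS : PalaisSmale f)
    (hf : ContDiff ℝ 2 f) {Z : Set H} (hZ : IsClosed Z) {c : ℝ}
    (hZc : ∀ u ∈ Z, fderiv ℝ f u = 0 → f u ≠ c) :
    ∃ δ : ℝ, 0 < δ ∧ ∀ u ∈ Z, ∀ z, dist z u ≤ δ → |f z - c| ≤ δ → δ ≤ ‖fderiv ℝ f z‖ := by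
  by_contra! hcon
  choose u huZ z hzu hzc hzd using fun n : ℕ => hcon (1 / ((n : ℝ) + 1)) (by positivity)
  have hlim := tendsto_one_div_add_atTop_nhds_zero_nat (𝕜 := ℝ)
  have hle1 : ∀ n : ℕ, 1 / ((n : ℝ) + 1) ≤ 1 := fun n =>
    div_le_one_of_le₀ (by linarith [n.cast_nonneg (α := ℝ)]) (by positivity)
  have hfc : Tendsto (fun n => f (z n)) atTop (𝓝 c) :=
    tendsto_iff_dist_tendsto_zero.2 (squeeze_zero (fun _ => dist_nonneg) hzc hlim)
  have hdz : Tendsto (fun n => ‖fderiv ℝ f (z n)‖) atTop (𝓝 0) :=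
    squeeze_zero (fun _ => norm_nonneg _) (fun n => (hzd n).le) hlim
  obtain ⟨φ, x, hφ, hx⟩ := hPS z ⟨|c| + 1, fun n => by
    have := abs_sub_abs_le_abs_sub (f (z n)) c
    linarith [hzc n, hle1 n]⟩ hdz
  have hux : Tendsto (fun i => u (φ i)) atTop (𝓝 x) := by
    have h0 : Tendsto (fun i => dist (z (φ i)) (u (φ i))) atTop (𝓝 0) :=
      (squeeze_zero (fun _ => dist_nonneg) hzu hlim).comp hφ.tendsto_atTop
    exact (tendsto_iff_of_dist h0).1 hx
  have hfderiv : Continuous (fderiv ℝ f) := hf.continuous_fderiv (by norm_num)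
  refine hZc x (hZ.mem_of_tendsto hux (Eventually.of_forall fun i => huZ _)) ?_ ?_
  · exact norm_eq_zero.1 (tendsto_nhds_unique ((hfderiv.norm.tendsto x).comp hx)
      (hdz.comp hφ.tendsto_atTop))
  · exact tendsto_nhds_unique ((hf.continuous.tendsto x).comp hx) (hfc.comp hφ.tendsto_atTop)

variable [InnerProductSpace ℝ H]

/-- A finite set of nonzero vectors is avoided by some hyperplane. -/
theorem exists_forall_inner_ne_zero {K : Set H} (hK : K.Finite) (h0 : (0 : H) ∉ K) :
    ∃ v : H, ∀ u ∈ K, inner ℝ v u ≠ 0 := by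
  have := hK.to_subtype
  obtain ⟨v, hv⟩ := Module.Dual.exists_forall_ne_zero_of_forall_exists
    (fun u : K => (innerₗ H (u : H) : Module.Dual ℝ H)) fun u => ⟨u, by
      simpa using fun h : (u : H) = 0 => h0 (h ▸ u.2)⟩
  exact ⟨v, fun u hu => by rw [real_inner_comm]; exact hv ⟨u, hu⟩⟩

variable [CompleteSpace H]

/-- Odd deformation across a level `c`, away from the critical points of that level. -/
theorem PalaisSmale.exists_odd_deformation {f : H → ℝ} (hPS : PalaisSmale f)
    (hf : ContDiff ℝ 2 f) (heven : ∀ u, f (-u) = f u) {Z : Set H} (hZ : IsClosed Z) {c : ℝ}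
    (hZc : ∀ u ∈ Z, fderiv ℝ f u = 0 → f u ≠ c) :
    ∃ ε : ℝ, 0 < ε ∧ ∃ η : H → H, Continuous η ∧ (∀ u, η (-u) = -η u) ∧
      ∀ u ∈ Z, f u ≤ c + ε → f (η u) ≤ c - ε := by
  obtain ⟨δ, hδ, hslope⟩ := hPS.exists_le_norm_fderiv hf hZ hZc
  obtain ⟨w, hw, hwodd, hw0, hdesc⟩ := exists_odd_descent_field hf heven
  refine ⟨min δ (δ ^ 2 / 4), by positivity, ?_⟩
  set ε := min δ (δ ^ 2 / 4)
  have hε₁ : ε ≤ δ := min_le_left _ _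
  have hε₂ : ε ≤ δ ^ 2 / 4 := min_le_right _ _
  obtain ⟨η, hη, hηodd, hηE⟩ := exists_odd_map_of_forall_exists_iterate hf.continuous w hw hwodd
    (fun u τ hτ => (hdesc u τ hτ).trans (sub_le_self _ (mul_nonneg hτ.1 (by positivity))))
    (E := Z ∩ {u | f u ≤ c + ε}) (a := c - ε)
    (hZ.inter (isClosed_le hf.continuous continuous_const))
    (fun u hu => exists_iterate_lt_of_le_slope hw
      (hf.continuous_fderiv (by norm_num)).norm hw0
      (fun v => by simpa using hdesc v 1 (by simp)) hδ (by linarith) hu.2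
      fun z hz hzc => hslope u hu.1 z hz (hzc.trans hε₁))
  exact ⟨η, hη, hηodd, fun u hu huc => hηE u ⟨hu, huc⟩⟩

/-- Crossing a level below `f 0` raises the genus of the sublevel sets by at most one, and by
nothing if the level is regular. -/
theorem PalaisSmale.exists_genus_sublevel_le {f : H → ℝ} (hPS : PalaisSmale f)
    (hf : ContDiff ℝ 2 f) (heven : ∀ u, f (-u) = f u) {c : ℝ} (hc : c < f 0)
    (hfin : {u | fderiv ℝ f u = 0 ∧ f u = c}.Finite) :
    ∃ ε : ℝ, 0 < ε ∧ genus {u | f u ≤ c + ε} ≤ genus {u | f u ≤ c - ε} + 1 ∧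
      ((∀ u, fderiv ℝ f u = 0 → f u ≠ c) →
        genus {u | f u ≤ c + ε} ≤ genus {u | f u ≤ c - ε}) := by
  by_cases hreg : ∀ u, fderiv ℝ f u = 0 → f u ≠ c
  · obtain ⟨ε, hε, η, hη, hηodd, h⟩ := hPS.exists_odd_deformation hf heven isClosed_univ
      fun u _ => hreg u
    have hle : genus {u | f u ≤ c + ε} ≤ genus {u | f u ≤ c - ε} :=
      genus_le_genus_of_mapsTo η hη hηodd fun u hu => h u trivial hu
    exact ⟨ε, hε, hle.trans le_self_add, fun _ => hle⟩
  · obtain ⟨v, hv⟩ := exists_forall_inner_ne_zero hfin fun h => hc.ne' h.2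
    have hg : Continuous fun u => inner ℝ v u := by fun_prop
    obtain ⟨ε, hε, η, hη, hηodd, h⟩ := hPS.exists_odd_deformation hf heven
      (isClosed_eq hg continuous_const) fun u hu hu' huc => hv u ⟨hu', huc⟩ hu
    exact ⟨ε, hε, genus_le_genus_add_one η hη hηodd _ hg (fun u => inner_neg_right v u)
      fun u hu hgu => h u hgu hu, fun h => absurd h hreg⟩

end PalaisSmale

/-- The pairs `{u, -u}` of critical points with critical values in `[a, b]`. -/
def criticalPairs {H : Type*} [NormedAddCommGroup H] [NormedSpace ℝ H] (f : H → ℝ) (a b : ℝ) :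
    Set (Set H) :=
  {p | ∃ u : H, fderiv ℝ f u = 0 ∧ a ≤ f u ∧ f u ≤ b ∧ p = {u, -u}}

section CriticalPairs

variable {H : Type*} [NormedAddCommGroup H] [NormedSpace ℝ H] {f : H → ℝ}

theorem criticalPairs_mono {a b b' : ℝ} (h : b ≤ b') :
    criticalPairs f a b ⊆ criticalPairs f a b' :=
  fun _ ⟨u, hu, hau, hub, hp⟩ => ⟨u, hu, hau, hub.trans h, hp⟩

theorem finite_criticalPoints_of_finite_criticalPairs {a b c : ℝ}
    (hfin : (criticalPairs f a b).Finite) (hac : a ≤ c) (hcb : c ≤ b) :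
    {u | fderiv ℝ f u = 0 ∧ f u = c}.Finite := by
  refine Set.Finite.subset (hfin.sUnion ?_) ?_
  · rintro p ⟨u, -, -, -, rfl⟩
    exact Set.toFinite _
  · rintro u ⟨hu, rfl⟩
    exact ⟨{u, -u}, ⟨u, hu, hac, hcb, rfl⟩, by simp⟩

theorem encard_criticalPairs_add_one_le (heven : ∀ u, f (-u) = f u) {a b b' : ℝ} {u : H}
    (hu : fderiv ℝ f u = 0) (hau : a ≤ f u) (hbu : b < f u) (hub : f u ≤ b') :
    (criticalPairs f a b).encard + 1 ≤ (criticalPairs f a b').encard := by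
  have hnot : ({u, -u} : Set H) ∉ criticalPairs f a b := by
    rintro ⟨v, -, -, hvb, hp⟩
    have : u ∈ ({v, -v} : Set H) := hp ▸ by simp
    rcases this with rfl | h
    · exact hbu.not_ge hvb
    · rw [Set.mem_singleton_iff.1 h, heven] at hbu
      exact hbu.not_ge hvb
  rw [← Set.encard_insert_of_notMem hnot]
  exact Set.encard_le_encard (Set.insert_subset ⟨u, hu, hau, hub, rfl⟩
    (criticalPairs_mono (hbu.le.trans hub)))

end CriticalPairs

/-- The genus bound holds up to every level of `[c₁, c₂]`, by induction along the interval. -/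
theorem PalaisSmale.genus_sublevel_le_add_encard {H : Type*} [NormedAddCommGroup H]
    [InnerProductSpace ℝ H] [CompleteSpace H] {f : H → ℝ} (hPS : PalaisSmale f)
    (hf : ContDiff ℝ 2 f) (heven : ∀ u, f (-u) = f u) {c₁ c₂ : ℝ} (h12 : c₁ ≤ c₂)
    (h20 : c₂ < f 0) (hfin : (criticalPairs f c₁ c₂).Finite) :
    genus {u | f u ≤ c₂} ≤ genus {u | f u ≤ c₁} + (criticalPairs f c₁ c₂).encard := by
  let P : ℝ → Prop := fun t =>
    genus {u | f u ≤ t} ≤ genus {u | f u ≤ c₁} + (criticalPairs f c₁ t).encard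
  let S : Set ℝ := {t | t ∈ Icc c₁ c₂ ∧ ∀ s ∈ Icc c₁ t, P s}
  have hmono : ∀ {a b : ℝ}, a ≤ b → genus {u | f u ≤ a} ≤ genus {u | f u ≤ b} :=
    fun h => genus_mono fun u hu => le_trans hu h
  have hc₁S : c₁ ∈ S := ⟨⟨le_rfl, h12⟩, fun s hs => by
    obtain rfl : s = c₁ := le_antisymm hs.2 hs.1
    exact le_self_add⟩
  have hSbdd : BddAbove S := ⟨c₂, fun t ht => ht.1.2⟩
  set t := sSup S
  have hc₁t : c₁ ≤ t := le_csSup hSbdd hc₁S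
  have htc₂ : t ≤ c₂ := csSup_le ⟨c₁, hc₁S⟩ fun s hs => hs.1.2
  have hbelow : ∀ s, c₁ ≤ s → s < t → P s := fun s hs hst => by
    obtain ⟨r, hrS, hsr⟩ := exists_lt_of_lt_csSup ⟨c₁, hc₁S⟩ hst
    exact hrS.2 s ⟨hs, hsr.le⟩
  obtain ⟨ε, hε, hjump, hreg⟩ := hPS.exists_genus_sublevel_le hf heven (htc₂.trans_lt h20)
    (finite_criticalPoints_of_finite_criticalPairs hfin hc₁t htc₂)
  have habove : ∀ s, t ≤ s → s ≤ t + ε → P s := by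
    intro s hts hsε
    by_cases hcrit : ∀ u, fderiv ℝ f u = 0 → f u ≠ t
    · have hle := (hmono hsε).trans (hreg hcrit)
      rcases hc₁t.eq_or_lt with heq | hlt
      · exact (hle.trans (hmono (by linarith))).trans le_self_add
      · have hr := hbelow (max c₁ (t - ε)) (le_max_left _ _) (max_lt hlt (by linarith))
        refine (hle.trans (hmono (le_max_right c₁ _))).trans (hr.trans ?_)
        gcongr
        exact criticalPairs_mono (max_le (hc₁t.trans hts) (by linarith))
    · push Not at hcrit
      obtain ⟨u, hu, hut⟩ := hcrit
      have hle := (hmono hsε).trans hjump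
      rcases hc₁t.eq_or_lt with heq | hlt
      · refine hle.trans (add_le_add (hmono (by linarith)) ?_)
        rw [Set.one_le_encard_iff_nonempty]
        exact ⟨_, u, hu, hut ▸ hc₁t, hut ▸ hts, rfl⟩
      · have hlt' : max c₁ (t - ε) < t := max_lt hlt (by linarith)
        have hr := hbelow (max c₁ (t - ε)) (le_max_left _ _) hlt'
        refine hle.trans ((add_le_add_left ((hmono (le_max_right c₁ _)).trans hr) 1).trans ?_)
        rw [add_assoc]
        gcongr
        exact encard_criticalPairs_add_one_le heven hu (hut ▸ hc₁t) (hut ▸ hlt') (hut ▸ hts)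
  have hall : ∀ s ∈ Icc c₁ (t + ε), P s := fun s hs =>
    (lt_or_ge s t).elim (hbelow s hs.1) fun h => habove s h hs.2
  have hmem : min c₂ (t + ε) ∈ S :=
    ⟨⟨le_min h12 (by linarith), min_le_left _ _⟩,
      fun s hs => hall s ⟨hs.1, hs.2.trans (min_le_right _ _)⟩⟩
  have hle : min c₂ (t + ε) ≤ t := le_csSup hSbdd hmem
  have hc₂t : c₂ ≤ t := (min_le_iff.1 hle).resolve_right (by linarith)
  exact hall c₂ ⟨h12, by linarith⟩

/-- for an even `C²` functional `f` on a real Hilbert space satisfying the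
Palais–Smale condition, and `c₁ ≤ c₂ < f(0)`, the genus of the sublevel set `f^{c₂}` exceeds
that of `f^{c₁}` by at most the number of pairs `{−u,u}` of critical points of `f` with
critical values in `[c₁, c₂]`. -/
theorem genus_of_sublevel_sets {H : Type*} [NormedAddCommGroup H] [InnerProductSpace ℝ H]
    [CompleteSpace H]
    (f : H → ℝ) (hf : ContDiff ℝ 2 f) (heven : ∀ u, f (-u) = f u)
    (hPS : ∀ u : ℕ → H, (∃ M : ℝ, ∀ j, |f (u j)| ≤ M) →
      Filter.Tendsto (fun j => ‖fderiv ℝ f (u j)‖) Filter.atTop (nhds 0) →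
      ∃ (φ : ℕ → ℕ) (x : H), StrictMono φ ∧
        Filter.Tendsto (fun i => u (φ i)) Filter.atTop (nhds x))
    (c₁ c₂ : ℝ) (h12 : c₁ ≤ c₂) (h20 : c₂ < f 0) :
    genus {u : H | f u ≤ c₂}
      ≤ genus {u : H | f u ≤ c₁}
        + {p : Set H | ∃ u : H, fderiv ℝ f u = 0 ∧ c₁ ≤ f u ∧ f u ≤ c₂ ∧ p = {u, -u}}.encard := by
  by_cases hfin : (criticalPairs f c₁ c₂).Finite
  · exact PalaisSmale.genus_sublevel_le_add_encard hPS hf heven h12 h20 hfin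
  · have htop : (criticalPairs f c₁ c₂).encard = ⊤ := Set.encard_eq_top_iff.2 hfin
    exact le_of_le_of_eq le_top (by rw [← add_top, ← htop]; rfl)
end
end

section
/- Let H be a real Hilbert space, k ∈ ℕ, V ⊆ H a linear subspace with dim V = k+1, r > 0, and let S^k = { x ∈ V : ‖x‖ = r } be the k-dimensional sphere of radius r centered at 0. Then gen(S^k) = k+1. In particular, there is no continuous odd map φ : H → ℝ^m with m ≤ k such that φ(x) ≠ 0 for all x ∈ S^k, while such a map exists for m = k+1. -/
open MeasureTheory Real Set
open scoped ENNReal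

noncomputable section

/-! ### Tuple chains modulo two -/

/-- Formal sums modulo two of finite tuples of points of `E`. -/
abbrev TupleChain (E : Type*) := List E →₀ ZMod 2

namespace TupleChain

variable {E F : Type*}

/-- The chain consisting of a single tuple. -/
def of (l : List E) : TupleChain E := Finsupp.single l 1

/-- The linear extension of a function on tuples. -/
def extend {M : Type*} [AddCommGroup M] [Module (ZMod 2) M] (f : List E → M) :
    TupleChain E →ₗ[ZMod 2] M :=
  Finsupp.linearCombination (ZMod 2) f

@[simp]
lemma extend_of {M : Type*} [AddCommGroup M] [Module (ZMod 2) M] (f : List E → M) (l : List E) :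
    extend f (of l) = f l := by
  simp [extend, of]

lemma linearMap_ext {M : Type*} [AddCommGroup M] [Module (ZMod 2) M]
    {f g : TupleChain E →ₗ[ZMod 2] M} (h : ∀ l, f (of l) = g (of l)) : f = g :=
  Finsupp.lhom_ext' fun l => LinearMap.ext_ring (h l)

/-- Every module over `ZMod 2` has characteristic two. -/
lemma add_self_eq_zero {M : Type*} [AddCommGroup M] [Module (ZMod 2) M] (x : M) : x + x = 0 := by
  rw [← two_smul (ZMod 2) x, show (2 : ZMod 2) = 0 from rfl, zero_smul]

/-- Prepending a vertex to every tuple of a chain. -/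
def cone (v : E) : TupleChain E →ₗ[ZMod 2] TupleChain E := extend fun l => of (v :: l)

@[simp]
lemma cone_of (v : E) (l : List E) : cone v (of l) = of (v :: l) := extend_of _ _

/-- The chain map induced by a map of vertices. -/
def map (f : E → F) : TupleChain E →ₗ[ZMod 2] TupleChain F := extend fun l => of (l.map f)

@[simp]
lemma map_of (f : E → F) (l : List E) : map f (of l) = of (l.map f) := extend_of _ _

/-- The boundary of a tuple. -/
def boundaryList : List E → TupleChain E
  | [] => 0
  | v :: l => of l + cone v (boundaryList l)

/-- The augmented boundary operator: the sum of all ways to omit a vertex. -/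
def boundary : TupleChain E →ₗ[ZMod 2] TupleChain E := extend boundaryList

lemma boundary_nil : boundary (of ([] : List E)) = 0 := extend_of _ _

lemma boundary_cons (v : E) (l : List E) :
    boundary (of (v :: l)) = of l + cone v (boundary (of l)) := by
  simp [boundary, boundaryList]

lemma boundary_cone (v : E) (c : TupleChain E) :
    boundary (cone v c) = c + cone v (boundary c) := by
  have : boundary ∘ₗ cone v = LinearMap.id + cone v ∘ₗ boundary :=
    linearMap_ext fun l => by simp [boundary_cons]
  exact LinearMap.congr_fun this c

lemma boundary_boundary (c : TupleChain E) : boundary (boundary c) = 0 := by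
  have : boundary ∘ₗ boundary = (0 : TupleChain E →ₗ[ZMod 2] TupleChain E) := by
    refine linearMap_ext fun l => ?_
    induction l with
    | nil => simp [boundary_nil]
    | cons v l ih =>
      simp only [LinearMap.comp_apply, LinearMap.zero_apply] at ih ⊢
      rw [boundary_cons, map_add, boundary_cone, ih, map_zero, add_zero, add_self_eq_zero]
  exact LinearMap.congr_fun this c

lemma map_cone (f : E → F) (v : E) (c : TupleChain E) :
    map f (cone v c) = cone (f v) (map f c) := by
  have : map f ∘ₗ cone v = cone (f v) ∘ₗ map f := linearMap_ext fun l => by simp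
  exact LinearMap.congr_fun this c

lemma boundary_map (f : E → F) (c : TupleChain E) :
    boundary (map f c) = map f (boundary c) := by
  have : boundary ∘ₗ map f = map f ∘ₗ boundary := by
    refine linearMap_ext fun l => ?_
    induction l with
    | nil => simp [boundary_nil]
    | cons v l ih =>
      simp only [LinearMap.comp_apply, map_of, List.map_cons] at ih ⊢
      rw [boundary_cons, boundary_cons, map_add, map_cone, ih, map_of]
  exact LinearMap.congr_fun this c

/-- The prism over a tuple, with bottom face given by `f` and top face given by `g`. -/
def prismList (f g : E → F) : List E → TupleChain F
  | [] => 0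
  | v :: l => of (f v :: g v :: l.map g) + cone (f v) (prismList f g l)

/-- The prism operator, a chain homotopy between `map f` and `map g`. -/
def prism (f g : E → F) : TupleChain E →ₗ[ZMod 2] TupleChain F := extend (prismList f g)

lemma prism_nil (f g : E → F) : prism f g (of []) = 0 := extend_of _ _

lemma prism_cons (f g : E → F) (v : E) (l : List E) :
    prism f g (of (v :: l)) = of (f v :: g v :: l.map g) + cone (f v) (prism f g (of l)) := by
  simp [prism, prismList]

lemma prism_cone (f g : E → F) (v : E) (c : TupleChain E) :
    prism f g (cone v c) = cone (f v) (cone (g v) (map g c)) + cone (f v) (prism f g c) := by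
  have : prism f g ∘ₗ cone v
      = cone (f v) ∘ₗ cone (g v) ∘ₗ map g + cone (f v) ∘ₗ prism f g :=
    linearMap_ext fun l => by simp [prism_cons]
  exact LinearMap.congr_fun this c

lemma boundary_prism_add (f g : E → F) (c : TupleChain E) :
    boundary (prism f g c) + prism f g (boundary c) = map f c + map g c := by
  have : boundary ∘ₗ prism f g + prism f g ∘ₗ boundary = map f + map g := by
    refine linearMap_ext fun l => ?_
    induction l with
    | nil => simp [boundary_nil, prism_nil, add_self_eq_zero]
    | cons v l ih =>
      simp only [LinearMap.add_apply, LinearMap.comp_apply, map_of, List.map_cons] at ih ⊢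
      have hb : boundary (of (l.map g)) = map g (boundary (of l)) := by
        rw [← map_of, boundary_map]
      have hP := congrArg (cone (f v)) ih
      simp only [map_add, cone_of] at hP
      simp only [prism_cons, boundary_cons, map_add, boundary_cone, prism_cone, cone_of, hb]
      have h1 := add_self_eq_zero (prism f g (of l))
      have h2 := add_self_eq_zero (cone (f v) (cone (g v) (map g (boundary (of l)))))
      have h3 := add_self_eq_zero (of (f v :: l.map g))
      linear_combination (norm := abel) h1 + h2 + h3 + hP
  exact LinearMap.congr_fun this c

lemma boundary_prism (f g : E → F) {c : TupleChain E} (hc : boundary c = 0) :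
    boundary (prism f g c) = map f c + map g c := by
  simpa [hc] using boundary_prism_add f g c

/-! ### Chains of small tuples -/

/-- The chains all of whose tuples satisfy `p`. -/
def supp (p : List E → Prop) : Submodule (ZMod 2) (TupleChain E) :=
  Submodule.span (ZMod 2) {c | ∃ l, p l ∧ of l = c}

lemma of_mem_supp {p : List E → Prop} {l : List E} (hl : p l) : of l ∈ supp p :=
  Submodule.subset_span ⟨l, hl, rfl⟩

lemma apply_mem_of_mem_supp {M : Type*} [AddCommGroup M] [Module (ZMod 2) M]
    {p : List E → Prop} (T : TupleChain E →ₗ[ZMod 2] M) (N : Submodule (ZMod 2) M)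
    (h : ∀ l, p l → T (of l) ∈ N) {c : TupleChain E} (hc : c ∈ supp p) : T c ∈ N := by
  have : supp p ≤ N.comap T := Submodule.span_le.2 (by rintro _ ⟨l, hl, rfl⟩; exact h l hl)
  exact this hc

lemma eq_of_mem_supp {M : Type*} [AddCommGroup M] [Module (ZMod 2) M]
    {p : List E → Prop} {T T' : TupleChain E →ₗ[ZMod 2] M}
    (h : ∀ l, p l → T (of l) = T' (of l)) {c : TupleChain E} (hc : c ∈ supp p) : T c = T' c :=
  apply_mem_of_mem_supp LinearMap.id (LinearMap.eqLocus T T') h hc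

lemma supp_mono {p q : List E → Prop} (h : ∀ l, p l → q l) : supp p ≤ supp q :=
  Submodule.span_mono (by rintro _ ⟨l, hl, rfl⟩; exact ⟨l, h l hl, rfl⟩)

lemma prism_of_mem_supp (f g : E → F) (l : List E) :
    prism f g (of l) ∈ supp fun l' => ∀ x ∈ l', ∃ v ∈ l, x = f v ∨ x = g v := by
  induction l with
  | nil => simp [prism_nil]
  | cons v l ih =>
    rw [prism_cons]
    refine add_mem (of_mem_supp ?_) (apply_mem_of_mem_supp _ _ (fun l' hl' => ?_) ih)
    · intro x hx
      simp only [List.mem_cons, List.mem_map] at hx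
      rcases hx with rfl | rfl | ⟨w, hw, rfl⟩
      · exact ⟨v, by simp, Or.inl rfl⟩
      · exact ⟨v, by simp, Or.inr rfl⟩
      · exact ⟨w, by simp [hw], Or.inr rfl⟩
    · rw [cone_of]
      refine of_mem_supp fun x hx => ?_
      rcases List.mem_cons.1 hx with rfl | hx
      · exact ⟨v, by simp, Or.inl rfl⟩
      · obtain ⟨w, hw, h⟩ := hl' x hx
        exact ⟨w, by simp [hw], h⟩

/-- A tuple of points of `K` at pairwise distance less than `ε`. -/
def IsSmall [PseudoMetricSpace E] (K : Set E) (ε : ℝ) (l : List E) : Prop :=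
  (∀ x ∈ l, x ∈ K) ∧ ∀ x ∈ l, ∀ y ∈ l, dist x y < ε

lemma map_mem_supp_isSmall [PseudoMetricSpace E] [PseudoMetricSpace F] {K : Set E} {L : Set F}
    {δ ε : ℝ} {f : E → F} (hf : MapsTo f K L)
    (hd : ∀ x ∈ K, ∀ y ∈ K, dist x y < δ → dist (f x) (f y) < ε)
    {c : TupleChain E} (hc : c ∈ supp (IsSmall K δ)) : map f c ∈ supp (IsSmall L ε) := by
  refine apply_mem_of_mem_supp _ _ (fun l hl => ?_) hc
  rw [map_of]
  refine of_mem_supp ⟨?_, ?_⟩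
  · simpa using fun x hx => hf (hl.1 x hx)
  · simpa using fun x hx y hy => hd x (hl.1 x hx) y (hl.1 y hy) (hl.2 x hx y hy)

lemma prism_mem_supp_isSmall [PseudoMetricSpace E] [PseudoMetricSpace F] {K : Set E} {L : Set F}
    {δ ε : ℝ} {f g : E → F} (hf : MapsTo f K L) (hg : MapsTo g K L)
    (hff : ∀ x ∈ K, ∀ y ∈ K, dist x y < δ → dist (f x) (f y) < ε)
    (hgg : ∀ x ∈ K, ∀ y ∈ K, dist x y < δ → dist (g x) (g y) < ε)
    (hfg : ∀ x ∈ K, ∀ y ∈ K, dist x y < δ → dist (f x) (g y) < ε)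
    {c : TupleChain E} (hc : c ∈ supp (IsSmall K δ)) : prism f g c ∈ supp (IsSmall L ε) := by
  refine apply_mem_of_mem_supp _ _ (fun l hl => ?_) hc
  refine supp_mono (fun l' hl' => ⟨fun x hx => ?_, fun x hx y hy => ?_⟩) (prism_of_mem_supp f g l)
  · obtain ⟨v, hv, rfl | rfl⟩ := hl' x hx
    exacts [hf (hl.1 v hv), hg (hl.1 v hv)]
  · obtain ⟨v, hv, hxv⟩ := hl' x hx
    obtain ⟨w, hw, hyw⟩ := hl' y hy
    have hv' := hl.1 v hv
    have hw' := hl.1 w hw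
    have hvw := hl.2 v hv w hw
    rcases hxv with rfl | rfl <;> rcases hyw with rfl | rfl
    · exact hff v hv' w hw' hvw
    · exact hfg v hv' w hw' hvw
    · rw [dist_comm] at hvw ⊢
      exact hfg w hw' v hv' hvw
    · exact hgg v hv' w hw' hvw

/-! ### Products of sign cocycles -/

/-- The cup product of the coboundaries of the functions in a list, evaluated on a tuple. -/
def cupList : List (E → ZMod 2) → List E → ZMod 2
  | [], [_] => 1
  | s :: ss, v :: w :: l => (s v + s w) * cupList ss (w :: l)
  | _, _ => 0

/-- The cup product of the coboundaries of the functions in a list, as a functional on chains. -/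
def cup (ss : List (E → ZMod 2)) : TupleChain E →ₗ[ZMod 2] ZMod 2 := extend (cupList ss)

/-- The product of a function on vertices with a cup product, evaluated on a tuple. -/
def twistedCupList (s : E → ZMod 2) (ss : List (E → ZMod 2)) : List E → ZMod 2
  | [] => 0
  | v :: l => s v * cupList ss (v :: l)

/-- The product of a function on vertices with a cup product, as a functional on chains. -/
def twistedCup (s : E → ZMod 2) (ss : List (E → ZMod 2)) : TupleChain E →ₗ[ZMod 2] ZMod 2 :=
  extend (twistedCupList s ss)

lemma twistedCup_cone (s : E → ZMod 2) (ss : List (E → ZMod 2)) (v : E) (c : TupleChain E) :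
    twistedCup s ss (cone v c) = s v * cup ss (cone v c) := by
  have : twistedCup s ss ∘ₗ cone v = s v • (cup ss ∘ₗ cone v) :=
    linearMap_ext fun l => by simp [twistedCup, twistedCupList, cup]
  exact LinearMap.congr_fun this c

lemma cup_nil_cone_cone (v w : E) (c : TupleChain E) : cup [] (cone v (cone w c)) = 0 := by
  have : cup [] ∘ₗ cone v ∘ₗ cone w = 0 :=
    linearMap_ext fun l => by simp [cup, cupList]
  exact LinearMap.congr_fun this c

lemma cup_nil_boundary (c : TupleChain E) : cup [] (boundary c) = 0 := by
  have : cup [] ∘ₗ boundary = (0 : TupleChain E →ₗ[ZMod 2] ZMod 2) := by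
    refine linearMap_ext fun l => ?_
    rcases l with _ | ⟨u, _ | ⟨v, l⟩⟩
    · simp [boundary_nil]
    · simp [boundary_cons, boundary_nil, cup, cupList]
    · simp only [LinearMap.comp_apply, boundary_cons, map_add, cup_nil_cone_cone]
      rcases l with _ | ⟨w, l⟩
      · simp [cup, cupList, add_self_eq_zero]
      · simp [cup, cupList]
  exact LinearMap.congr_fun this c

lemma twistedCup_boundary_of_cocycle (s : E → ZMod 2) {ss : List (E → ZMod 2)}
    (hss : ∀ c, cup ss (boundary c) = 0) (c : TupleChain E) :
    twistedCup s ss (boundary c) = cup (s :: ss) c := by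
  have : twistedCup s ss ∘ₗ boundary = cup (s :: ss) := by
    refine linearMap_ext fun l => ?_
    rcases l with _ | ⟨v, _ | ⟨w, l⟩⟩
    · simp [boundary_nil, cup, cupList]
    · simp [boundary_cons, boundary_nil, twistedCup, twistedCupList, cup, cupList]
    · have h := hss (of (v :: w :: l))
      rw [boundary_cons, map_add] at h
      rw [LinearMap.comp_apply, boundary_cons, map_add, twistedCup_cone,
        ← neg_eq_of_add_eq_zero_right h]
      simp only [twistedCup, twistedCupList, cup, cupList, extend_of, ZMod.neg_eq_self_mod_two]
      ring
  exact LinearMap.congr_fun this c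

lemma cup_boundary (ss : List (E → ZMod 2)) (c : TupleChain E) : cup ss (boundary c) = 0 := by
  induction ss generalizing c with
  | nil => exact cup_nil_boundary c
  | cons s ss ih => rw [← twistedCup_boundary_of_cocycle s ih, boundary_boundary, map_zero]

lemma twistedCup_boundary (s : E → ZMod 2) (ss : List (E → ZMod 2)) (c : TupleChain E) :
    twistedCup s ss (boundary c) = cup (s :: ss) c :=
  twistedCup_boundary_of_cocycle s (cup_boundary ss) c

lemma cupList_eq_zero {ss : List (E → ZMod 2)} {s : E → ZMod 2} (hs : s ∈ ss) {l : List E}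
    (hl : ∀ x ∈ l, ∀ y ∈ l, s x = s y) : cupList ss l = 0 := by
  induction ss generalizing l with
  | nil => simp at hs
  | cons t ss ih =>
    rcases l with _ | ⟨v, _ | ⟨w, l⟩⟩
    · rfl
    · rfl
    · rw [cupList]
      rcases List.mem_cons.1 hs with rfl | hs
      · rw [hl v (by simp) w (by simp), add_self_eq_zero, zero_mul]
      · rw [ih hs fun x hx y hy => hl x (List.mem_cons_of_mem _ hx) y (List.mem_cons_of_mem _ hy),
          mul_zero]

/-- A function to `ZMod 2` that changes value under `x ↦ -x`, away from the origin. -/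
def IsOddSign [AddGroup E] (s : E → ZMod 2) : Prop := ∀ x, x ≠ 0 → s (-x) = s x + 1

lemma cupList_map_neg [AddGroup E] {ss : List (E → ZMod 2)} (hss : ∀ s ∈ ss, IsOddSign s)
    {l : List E} (hl : ∀ x ∈ l, x ≠ 0) : cupList ss (l.map Neg.neg) = cupList ss l := by
  induction ss generalizing l with
  | nil => rcases l with _ | ⟨v, _ | ⟨w, l⟩⟩ <;> rfl
  | cons s ss ih =>
    rcases l with _ | ⟨v, _ | ⟨w, l⟩⟩
    · rfl
    · rfl
    · have h := ih (fun t ht => hss t (List.mem_cons_of_mem _ ht))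
        (l := w :: l) fun x hx => hl x (List.mem_cons_of_mem _ hx)
      simp only [List.map_cons, cupList] at h ⊢
      have hs := hss s (by simp)
      rw [h, hs v (hl v (by simp)), hs w (hl w (by simp))]
      linear_combination cupList ss (w :: l) * add_self_eq_zero (1 : ZMod 2)

lemma twistedCup_add_map_neg [AddGroup E] {s : E → ZMod 2} {ss : List (E → ZMod 2)}
    (hs : IsOddSign s) (hss : ∀ t ∈ ss, IsOddSign t) {c : TupleChain E}
    (hc : c ∈ supp fun l => ∀ x ∈ l, x ≠ 0) :
    twistedCup s ss (c + map Neg.neg c) = cup ss c := by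
  refine eq_of_mem_supp (T := twistedCup s ss ∘ₗ (LinearMap.id + map Neg.neg))
    (fun l hl => ?_) hc
  rcases l with _ | ⟨v, l⟩
  · cases ss <;> simp [twistedCup, twistedCupList, cup, cupList]
  · have h := cupList_map_neg hss hl
    simp only [List.map_cons] at h
    simp only [LinearMap.comp_apply, LinearMap.add_apply, LinearMap.id_apply, map_of, map_add,
      twistedCup, extend_of, twistedCupList, List.map_cons, cup, h, hs v (hl v (by simp))]
    linear_combination s v * add_self_eq_zero (cupList ss (v :: l))

lemma boundary_add_map_neg [AddGroup E] {c z : TupleChain E}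
    (h : boundary c = z + map Neg.neg z) : boundary (c + map Neg.neg c) = 0 := by
  have hz : map Neg.neg (map Neg.neg z) = z := by
    have : map Neg.neg ∘ₗ map Neg.neg = (LinearMap.id : TupleChain E →ₗ[ZMod 2] _) :=
      linearMap_ext fun l => by simp
    exact LinearMap.congr_fun this z
  rw [map_add, boundary_map, h, map_add, hz, add_comm (map Neg.neg z), add_self_eq_zero]

/-! ### Antipodal chains in cross-polytopes -/

lemma dist_segment_lt [NormedAddCommGroup E] [NormedSpace ℝ E] {x y e : E} {R s t ε : ℝ}
    (hy : ‖y‖ ≤ R) (hs : s ∈ Icc (0 : ℝ) 1) (hst : |s - t| * (R + ‖e‖) < ε / 2)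
    (hxy : dist x y < ε / 2) :
    dist ((1 - s) • x + s • e) ((1 - t) • y + t • e) < ε := by
  have key : (1 - s) • x + s • e - ((1 - t) • y + t • e)
      = (1 - s) • (x - y) + (s - t) • (e - y) := by
    module
  rw [dist_eq_norm] at hxy ⊢
  rw [key]
  have h1 : ‖(1 - s) • (x - y)‖ ≤ ‖x - y‖ := by
    rw [norm_smul, Real.norm_of_nonneg (by linarith [hs.2])]
    exact mul_le_of_le_one_left (norm_nonneg _) (by linarith [hs.1])
  have h2 : ‖(s - t) • (e - y)‖ ≤ |s - t| * (R + ‖e‖) := by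
    rw [norm_smul, Real.norm_eq_abs]
    gcongr
    linarith [norm_sub_le e y]
  linarith [norm_add_le ((1 - s) • (x - y)) ((s - t) • (e - y))]

/-- A cycle of sufficiently small tuples bounds a chain of small tuples in any set containing its
cone. -/
lemma exists_boundary_eq [NormedAddCommGroup E] [NormedSpace ℝ E] {K L : Set E} {e : E} {R : ℝ}
    (hR : ∀ x ∈ K, ‖x‖ ≤ R) (he : e ∈ L)
    (hL : ∀ x ∈ K, ∀ t ∈ Icc (0 : ℝ) 1, (1 - t) • x + t • e ∈ L) {ε : ℝ} (hε : 0 < ε)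
    {z : TupleChain E} (hz : z ∈ supp (IsSmall K (ε / 2))) (hb : boundary z = 0) :
    ∃ c ∈ supp (IsSmall L ε), boundary c = z := by
  obtain ⟨N, hN⟩ := exists_nat_gt (max 1 ((R + ‖e‖) / (ε / 2)))
  have hN0 : (0 : ℝ) < N := by linarith [(le_max_left _ _).trans_lt hN]
  have hNε : 1 / (N : ℝ) * (R + ‖e‖) < ε / 2 := by
    have := (le_max_right _ _).trans_lt hN
    rw [div_lt_iff₀ (by positivity)] at this
    rw [one_div, inv_mul_lt_iff₀ hN0]
    exact this
  let h : ℕ → E → E := fun n x => (1 - (n : ℝ) / N) • x + ((n : ℝ) / N) • e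
  have hI : ∀ n ≤ N, (n : ℝ) / N ∈ Icc (0 : ℝ) 1 := fun n hn =>
    ⟨by positivity, (div_le_one hN0).2 (by exact_mod_cast hn)⟩
  have hmaps : ∀ n ≤ N, MapsTo (h n) K L := fun n hn x hx => hL x hx _ (hI n hn)
  have hclose : ∀ n ≤ N, ∀ x ∈ K, ∀ y ∈ K, dist x y < ε / 2 → dist (h n x) (h n y) < ε :=
    fun n hn x _ y hy hxy =>
      dist_segment_lt (hR y hy) (hI n hn) (by simpa using half_pos hε) hxy
  have hstep : ∀ n ≤ N, ∀ x ∈ K, ∀ y ∈ K, dist x y < ε / 2 → dist (h n x) (h (n + 1) y) < ε := by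
    intro n hn x _ y hy hxy
    refine dist_segment_lt (hR y hy) (hI n hn) ?_ hxy
    have : (n : ℝ) / N - ((n + 1 : ℕ) : ℝ) / N = -(1 / N) := by push_cast; ring
    rwa [this, abs_neg, abs_of_pos (by positivity)]
  have hhomotopy : ∀ n ≤ N, ∃ c ∈ supp (IsSmall L ε), boundary c = z + map (h n) z := by
    intro n
    induction n with
    | zero =>
      intro _
      refine ⟨0, zero_mem _, ?_⟩
      have h0 : map (h 0) = (LinearMap.id : TupleChain E →ₗ[ZMod 2] _) :=
        linearMap_ext fun l => by simp [h]
      rw [h0, LinearMap.id_apply, add_self_eq_zero, map_zero]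
    | succ n ih =>
      intro hn
      have hn' : n ≤ N := by omega
      obtain ⟨c, hc, hcb⟩ := ih hn'
      refine ⟨c + prism (h n) (h (n + 1)) z, add_mem hc (prism_mem_supp_isSmall (hmaps n hn')
        (hmaps _ hn) (hclose n hn') (hclose _ hn) (hstep n hn') hz), ?_⟩
      rw [map_add, hcb, boundary_prism _ _ hb]
      linear_combination (norm := abel) add_self_eq_zero (map (h n) z)
  obtain ⟨c, hc, hcb⟩ := hhomotopy N le_rfl
  refine ⟨c + cone e (map (h N) z), add_mem hc ?_, ?_⟩
  · refine apply_mem_of_mem_supp (cone e ∘ₗ map (h N)) _ (fun l _ => ?_) hz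
    have hall : ∀ x ∈ e :: l.map (h N), x = e := by
      simp [h, div_self hN0.ne']
    rw [LinearMap.comp_apply, map_of, cone_of]
    refine of_mem_supp ⟨fun x hx => hall x hx ▸ he, fun x hx y hy => ?_⟩
    rw [hall x hx, hall y hy, dist_self]
    exact hε
  · rw [map_add, hcb, boundary_cone, boundary_map, hb, map_zero, map_zero, add_zero, add_assoc,
      add_self_eq_zero, add_zero]

/-- The span of `n + 1` linearly independent vectors contains a compact symmetric set avoiding the
origin that carries arbitrarily small chains on which all `n`-fold products of sign cocycles
evaluate to one. -/
theorem exists_antipodal_chain [NormedAddCommGroup E] [NormedSpace ℝ E] (n : ℕ)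
    (v : Fin (n + 1) → E) (hv : LinearIndependent ℝ v) :
    ∃ K : Set E, K.Nonempty ∧ IsCompact K ∧ (∀ x ∈ K, -x ∈ K) ∧ (0 ∉ K) ∧
      (∀ x ∈ K, x ∈ Submodule.span ℝ (range v)) ∧
      ∀ ε > 0, ∃ c ∈ supp (IsSmall K ε), boundary (c + map Neg.neg c) = 0 ∧
        ∀ ss : List (E → ZMod 2), ss.length = n → (∀ s ∈ ss, IsOddSign s) → cup ss c = 1 := by
  induction n with
  | zero =>
    have h0 : v 0 ≠ 0 := hv.ne_zero 0
    refine ⟨{v 0, -v 0}, ⟨v 0, by simp⟩, (Set.toFinite _).isCompact, ?_, ?_, ?_,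
      fun ε hε => ⟨of [v 0], ?_, ?_, ?_⟩⟩
    · rintro x (rfl | rfl) <;> simp
    · rintro (h | h)
      exacts [h0 h.symm, h0 (neg_eq_zero.1 h.symm)]
    · have : v 0 ∈ Submodule.span ℝ (range v) := Submodule.subset_span ⟨0, rfl⟩
      rintro x (rfl | rfl)
      exacts [this, neg_mem this]
    · exact of_mem_supp (by simp [IsSmall, hε])
    · simp [boundary_cons, boundary_nil, add_self_eq_zero]
    · intro ss hss _
      rw [List.length_eq_zero_iff.1 hss]
      simp [cup, cupList]
  | succ n ih =>
    obtain ⟨hfirst, hlast⟩ := linearIndependent_finSucc'.1 hv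
    obtain ⟨K, ⟨x₀, hx₀⟩, hK, hKneg, hK0, hKspan, hKc⟩ := ih _ hfirst
    set e := v (Fin.last _)
    let W := Submodule.span ℝ (range fun i : Fin (n + 1) => v i.castSucc)
    have hWV : W ≤ Submodule.span ℝ (range v) :=
      Submodule.span_mono (by rintro _ ⟨i, rfl⟩; exact ⟨i.castSucc, rfl⟩)
    have heV : e ∈ Submodule.span ℝ (range v) := Submodule.subset_span ⟨_, rfl⟩
    let G : ℝ × E → E := fun p => (1 - p.1) • p.2 + p.1 • e
    have hG : Continuous G := by fun_prop
    let L₀ := G '' (Icc (0 : ℝ) 1 ×ˢ K)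
    have hL₀ : IsCompact L₀ := (isCompact_Icc.prod hK).image hG
    have hL₀0 : (0 : E) ∉ L₀ := by
      rintro ⟨⟨t, x⟩, ⟨-, hx⟩, h⟩
      simp only [G] at h hx
      have hte : t • e ∈ W := by
        rw [← neg_eq_of_add_eq_zero_right h]
        exact neg_mem (W.smul_mem _ (hKspan x hx))
      by_cases ht : t = 0
      · simp only [ht, sub_zero, one_smul, zero_smul, add_zero] at h
        exact hK0 (h ▸ hx)
      · exact hlast ((W.smul_mem_iff ht).1 hte)
    have hL₀span : ∀ x ∈ L₀, x ∈ Submodule.span ℝ (range v) := by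
      rintro _ ⟨⟨t, x⟩, ⟨-, hx⟩, rfl⟩
      exact add_mem (Submodule.smul_mem _ _ (hWV (hKspan x hx))) (Submodule.smul_mem _ _ heV)
    have heL₀ : e ∈ L₀ := ⟨(1, x₀), ⟨by simp, hx₀⟩, by simp [G]⟩
    refine ⟨L₀ ∪ Neg.neg '' L₀, ⟨e, Or.inl heL₀⟩, hL₀.union (hL₀.image continuous_neg), ?_, ?_, ?_,
      fun ε hε => ?_⟩
    · rintro x (hx | ⟨y, hy, rfl⟩)
      · exact Or.inr ⟨x, hx, rfl⟩
      · exact Or.inl (by simpa using hy)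
    · rintro (h | ⟨y, hy, h⟩)
      · exact hL₀0 h
      · exact hL₀0 (neg_eq_zero.1 h ▸ hy)
    · rintro x (hx | ⟨y, hy, rfl⟩)
      exacts [hL₀span x hx, neg_mem (hL₀span y hy)]
    · obtain ⟨c, hc, hcb, hcup⟩ := hKc (ε / 2) (half_pos hε)
      obtain ⟨R, hR⟩ := hK.isBounded.exists_norm_le
      have hcneg : map Neg.neg c ∈ supp (IsSmall K (ε / 2)) :=
        map_mem_supp_isSmall (fun x hx => hKneg x hx) (fun x _ y _ h => by rwa [dist_neg_neg]) hc
      obtain ⟨d, hd, hdb⟩ := exists_boundary_eq (e := e) (L := L₀ ∪ Neg.neg '' L₀) hR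
        (Or.inl heL₀) (fun x hx t ht => Or.inl ⟨(t, x), ⟨ht, hx⟩, rfl⟩) hε (add_mem hc hcneg) hcb
      refine ⟨d, hd, boundary_add_map_neg hdb, fun ss hlen hodd => ?_⟩
      rcases ss with _ | ⟨s, ss⟩
      · simp at hlen
      · rw [← twistedCup_boundary, hdb, twistedCup_add_map_neg (hodd s (by simp))
          fun t ht => hodd t (List.mem_cons_of_mem _ ht)]
        · exact hcup ss (by simpa using hlen) fun t ht => hodd t (List.mem_cons_of_mem _ ht)
        · refine supp_mono (fun l hl x hx => ?_) hc
          rintro rfl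
          exact hK0 (hl.1 _ hx)

end TupleChain

/-! ### The Borsuk–Ulam theorem -/

/-- A sign function of a real-valued odd function, with an arbitrary odd choice at its zeros. -/
lemma exists_isOddSign {E : Type*} [NormedAddCommGroup E] [NormedSpace ℝ E] (f : E → ℝ)
    (hf : ∀ x, f (-x) = -f x) :
    ∃ s : E → ZMod 2, TupleChain.IsOddSign s ∧ (∀ x, 0 < f x → s x = 0) ∧
      ∀ x, f x < 0 → s x = 1 := by
  classical
  refine ⟨fun x => if f x < 0 ∨ f x = 0 ∧ WellOrderingRel x (-x) then 1 else 0, fun x hx => ?_,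
    fun x hx => if_neg ?_, fun x hx => if_pos (Or.inl hx)⟩
  · have hne : x ≠ -x := fun h => hx <| by
      have h2 : (2 : ℝ) • x = 0 := by rw [two_smul, ← eq_neg_iff_add_eq_zero, ← h]
      simpa using h2
    rcases lt_trichotomy (f x) 0 with h | h | h
    · simp [hf, h, h.le, h.ne, TupleChain.add_self_eq_zero]
    · rcases trichotomous_of WellOrderingRel x (-x) with h' | h' | h'
      · simp [hf, h, h', asymm h', TupleChain.add_self_eq_zero]
      · exact absurd h' hne
      · simp [hf, h, h', asymm h']
    · simp [hf, h, h.ne', h.not_gt]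
  · rintro (h | ⟨h, -⟩) <;> linarith

/-- The Borsuk–Ulam theorem: an odd map from a space containing `m + 1` linearly independent
vectors to `ℝ^m` that is continuous away from the origin vanishes at a nonzero point of their
span. -/
theorem exists_eq_zero_of_odd {E : Type*} [NormedAddCommGroup E] [NormedSpace ℝ E] {m : ℕ}
    (v : Fin (m + 1) → E) (hv : LinearIndependent ℝ v) (ψ : E → Fin m → ℝ)
    (hψ : ContinuousOn ψ {0}ᶜ) (hodd : ∀ x, ψ (-x) = -ψ x) :
    ∃ x ∈ Submodule.span ℝ (range v), x ≠ 0 ∧ ψ x = 0 := by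
  by_contra! hne
  obtain ⟨K, hKne, hK, -, hK0, hKspan, hKc⟩ := TupleChain.exists_antipodal_chain m v hv
  have hKψ : ContinuousOn ψ K := hψ.mono fun x hx h0 => hK0 (h0 ▸ hx)
  have hpos : ∀ x ∈ K, 0 < ‖ψ x‖ := fun x hx =>
    norm_pos_iff.2 (hne x (hKspan x hx) fun h0 => hK0 (h0 ▸ hx))
  obtain ⟨η, hη, hηK⟩ : ∃ η > 0, ∀ x ∈ K, η ≤ ‖ψ x‖ := by
    obtain ⟨x, hx, hmin⟩ := hK.exists_isMinOn hKne hKψ.norm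
    exact ⟨_, hpos x hx, fun y hy => hmin hy⟩
  obtain ⟨ε, hε, hεK⟩ := Metric.uniformContinuousOn_iff.1
    (hK.uniformContinuousOn_of_continuous hKψ) η hη
  choose s hs hs0 hs1 using fun i => exists_isOddSign (fun x => ψ x i) fun x => by simp [hodd]
  obtain ⟨c, hc, -, hcup⟩ := hKc ε hε
  have hone := hcup (List.ofFn s) (by simp) (by simpa [List.mem_ofFn] using hs)
  have hzero : TupleChain.cup (List.ofFn s) c = 0 := by
    refine TupleChain.eq_of_mem_supp (T' := 0) (fun l hl => ?_) hc
    rw [TupleChain.cup, TupleChain.extend_of, LinearMap.zero_apply]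
    rcases l with _ | ⟨w, l⟩
    · cases List.ofFn s <;> rfl
    · have hw : w ∈ w :: l := by simp
      obtain ⟨i, hi⟩ : ∃ i, η ≤ |ψ w i| := by
        by_contra! h
        exact (hηK w (hl.1 w hw)).not_gt ((pi_norm_lt_iff hη).2 h)
      have hsw : ∀ x ∈ w :: l, s i x = s i w := by
        intro x hx
        have hd : |ψ x i - ψ w i| < η :=
          (dist_le_pi_dist (ψ x) (ψ w) i).trans_lt
            (hεK x (hl.1 x hx) w (hl.1 w hw) (hl.2 x hx w hw))
        rw [abs_lt] at hd
        rcases le_abs.1 hi with h | h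
        · rw [hs0 i x (by linarith), hs0 i w (by linarith)]
        · rw [hs1 i x (by linarith), hs1 i w (by linarith)]
      exact TupleChain.cupList_eq_zero (List.mem_ofFn.2 ⟨i, rfl⟩)
        fun x hx y hy => (hsw x hx).trans (hsw y hy).symm
  exact zero_ne_one (hzero.symm.trans hone)

/-- An odd continuous map to `ℝ^m` vanishes somewhere on each sphere centered at the origin in a
subspace of dimension greater than `m`. -/
theorem exists_mem_sphere_eq_zero {E : Type*} [NormedAddCommGroup E] [NormedSpace ℝ E] {m : ℕ}
    {V : Submodule ℝ E} (hV : m < Module.finrank ℝ V) {r : ℝ} (hr : 0 < r)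
    {φ : E → EuclideanSpace ℝ (Fin m)} (hφ : Continuous φ) (hodd : ∀ u, φ (-u) = -φ u) :
    ∃ x ∈ V, ‖x‖ = r ∧ φ x = 0 := by
  have : FiniteDimensional ℝ V := Module.finite_of_finrank_pos (by omega)
  let v : Fin (m + 1) → E := fun i => Module.finBasis ℝ V (Fin.castLE hV i)
  have hv : LinearIndependent ℝ v :=
    ((Module.finBasis ℝ V).linearIndependent.map' V.subtype V.ker_subtype).comp _
      (Fin.castLE_injective hV)
  have hcont : ContinuousOn (fun x : E => WithLp.ofLp (φ ((r / ‖x‖) • x))) {0}ᶜ := by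
    refine (PiLp.continuous_ofLp 2 _).comp_continuousOn (hφ.comp_continuousOn ?_)
    exact (continuousOn_const.div continuousOn_id.norm fun x hx => norm_ne_zero_iff.2 hx).smul
      continuousOn_id
  obtain ⟨x, hx, hx0, h⟩ := exists_eq_zero_of_odd v hv _ hcont fun x => by simp [hodd]
  refine ⟨(r / ‖x‖) • x, V.smul_mem _ ?_, ?_, ?_⟩
  · exact Submodule.span_le.2 (by rintro _ ⟨i, rfl⟩; exact Subtype.coe_prop _) hx
  · rw [norm_smul, norm_div, norm_norm, div_mul_cancel₀ _ (norm_ne_zero_iff.2 hx0),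
      Real.norm_of_nonneg hr.le]
  · exact (WithLp.ofLp_eq_zero 2).1 h

/-- The coordinates of the orthogonal projection onto a subspace of dimension `n` form an odd
continuous map to `ℝ^n` without nontrivial zeros in the subspace. -/
theorem exists_odd_ne_zero {E : Type*} [NormedAddCommGroup E] [InnerProductSpace ℝ E] {n : ℕ}
    (V : Submodule ℝ E) [FiniteDimensional ℝ V] (hV : Module.finrank ℝ V = n) :
    ∃ φ : E → EuclideanSpace ℝ (Fin n), Continuous φ ∧ (∀ u, φ (-u) = -φ u) ∧
      ∀ x ∈ V, x ≠ 0 → φ x ≠ 0 := by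
  let b := (stdOrthonormalBasis ℝ V).reindex (finCongr hV)
  refine ⟨fun x => b.repr (V.orthogonalProjectionOnto x), by fun_prop, fun u => by simp,
    fun x hx hx0 h => hx0 ?_⟩
  have h' : V.orthogonalProjectionOnto x = 0 := by simpa using h
  rw [← Submodule.starProjection_eq_self_iff.2 hx, Submodule.starProjection_apply, h',
    Submodule.coe_zero]

/-- the genus of a `k`-dimensional sphere `S^k` of radius `r > 0` centered at
the origin in a `(k+1)`-dimensional subspace `V` of a real Hilbert space `H` equals `k+1`.
In particular no continuous odd `φ : H → ℝ^m` with `m ≤ k` is nonzero on all of `S^k`,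
while such a map exists for `m = k+1`. -/
theorem genus_of_sphere {H : Type*} [NormedAddCommGroup H] [InnerProductSpace ℝ H]
    [CompleteSpace H] (k : ℕ) (V : Submodule ℝ H) (hV : Module.finrank ℝ V = k + 1)
    (r : ℝ) (hr : 0 < r) :
    genus {x : H | x ∈ V ∧ ‖x‖ = r} = (k + 1 : ℕ∞) ∧
    (∀ m : ℕ, m ≤ k → ∀ φ : H → EuclideanSpace ℝ (Fin m), Continuous φ →
      (∀ u, φ (-u) = -(φ u)) → ∃ x : H, x ∈ V ∧ ‖x‖ = r ∧ φ x = 0) ∧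
    (∃ φ : H → EuclideanSpace ℝ (Fin (k + 1)), Continuous φ ∧ (∀ u, φ (-u) = -(φ u)) ∧
      ∀ x : H, x ∈ V ∧ ‖x‖ = r → φ x ≠ 0) := by
  have : FiniteDimensional ℝ V := Module.finite_of_finrank_pos (by omega)
  have hnone : ∀ m : ℕ, m ≤ k → ∀ φ : H → EuclideanSpace ℝ (Fin m), Continuous φ →
      (∀ u, φ (-u) = -(φ u)) → ∃ x : H, x ∈ V ∧ ‖x‖ = r ∧ φ x = 0 := fun m hm φ hφ hodd =>
    exists_mem_sphere_eq_zero (by omega) hr hφ hodd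
  obtain ⟨φ, hφ, hodd, hne⟩ := exists_odd_ne_zero V hV
  have hsphere : ∀ x : H, x ∈ V ∧ ‖x‖ = r → φ x ≠ 0 := fun x hx =>
    hne x hx.1 (norm_pos_iff.1 (hx.2 ▸ hr))
  refine ⟨le_antisymm (sInf_le ⟨k + 1, by simp, φ, hφ, hodd, hsphere⟩) (le_sInf ?_),
    hnone, φ, hφ, hodd, hsphere⟩
  rintro _ ⟨m, rfl, ψ, hψ, hψodd, hψne⟩
  by_contra! hlt
  have hm : m < k + 1 := by exact_mod_cast hlt
  obtain ⟨x, hxV, hxr, hx⟩ := hnone m (by omega) ψ hψ hψodd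
  exact hψne x ⟨hxV, hxr⟩ hx
end
end
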